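/- arXiv:2105.10677 — 4 statements merged into one kernel-verified Lean document; each statement's English description precedes it below -/
import Mathlib

section
/- Let 1 ≤ p < q ≤ m with q − p > 1. Every unanimous and strategy-proof RSCF φ : [D_≺(p, q)]^n → Δ(A) defined on the full (p, q)-hybrid domain is a (p, q)-PFBR. -/
open Finset

noncomputable section

/-- A preference is a linear order over the `m` alternatives, represented as a bijection
from rank positions (0-based: position `0` is the top) to alternatives. -/
abbrev Pref (m : ℕ) := Fin m ≃ Fin m

namespace PFBRPaper

variable {m n : ℕ}

/-- `a` is strictly preferred to `b` under `P`. -/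
def Prefers (P : Pref m) (a b : Fin m) : Prop := P.symm a < P.symm b

/-- The last alternative `a_m` (0-based index `m-1`). -/
def lastAlt (m : ℕ) [NeZero m] : Fin m :=
  ⟨m - 1, Nat.sub_lt (Nat.pos_of_ne_zero (NeZero.ne m)) Nat.one_pos⟩

/-- Every alternative is top-ranked by some preference in the domain. -/
def MinimallyRich [NeZero m] (D : Set (Pref m)) : Prop :=
  ∀ a : Fin m, ∃ P ∈ D, P 0 = a

/-- The preference ranking `a_m` first, ..., `a_1` last. -/
def revPref (m : ℕ) : Pref m :=
  ⟨Fin.rev, Fin.rev, fun i => Fin.rev_rev i, fun i => Fin.rev_rev i⟩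

/-- Diversity, with the labeling convention: the domain contains the preference ranking
`a_1` first, `a_2` second, ..., `a_m` last (the identity), together with its
complete reversal. -/
def Diversity (D : Set (Pref m)) : Prop :=
  Equiv.refl (Fin m) ∈ D ∧ revPref m ∈ D

/-- Two preferences are adjacent: the alternatives at two contiguous rank positions are
swapped and everything else is unchanged. -/
def Adjacent (P P' : Pref m) : Prop :=
  P ≠ P' ∧ ∃ k : ℕ, ∃ hk : k + 1 < m,
    P ⟨k, Nat.lt_of_succ_lt hk⟩ = P' ⟨k + 1, hk⟩ ∧
    P ⟨k + 1, hk⟩ = P' ⟨k, Nat.lt_of_succ_lt hk⟩ ∧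
    ∀ l : Fin m, (l : ℕ) ≠ k → (l : ℕ) ≠ k + 1 → P l = P' l

/-- `π 0, …, π (v-1)` is a path in `D` connecting `P` and `P'`. -/
def IsPath (D : Set (Pref m)) (P P' : Pref m) (π : ℕ → Pref m) (v : ℕ) : Prop :=
  1 ≤ v ∧ (∀ i < v, π i ∈ D) ∧
  (∀ i < v, ∀ j < v, π i = π j → i = j) ∧
  π 0 = P ∧ π (v - 1) = P' ∧
  ∀ i, i + 1 < v → Adjacent (π i) (π (i + 1))

/-- The path `π 0, …, π (v-1)` has no `{a,b}`-restoration: the relative ranking of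
`a` and `b` switches at most once along the path. -/
def NoRestoration (π : ℕ → Pref m) (v : ℕ) (a b : Fin m) : Prop :=
  ∀ i j k : ℕ, i < j → j < k → k < v →
    ¬(Prefers (π i) a b ∧ Prefers (π j) b a ∧ Prefers (π k) a b) ∧
    ¬(Prefers (π i) b a ∧ Prefers (π j) a b ∧ Prefers (π k) b a)

def NoRestorationDomain (D : Set (Pref m)) : Prop :=
  ∀ P ∈ D, ∀ P' ∈ D, P ≠ P' → ∀ a b : Fin m,
    ∃ π v, IsPath D P P' π v ∧ NoRestoration π v a b

def RegularDomain [NeZero m] (D : Set (Pref m)) : Prop :=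
  MinimallyRich D ∧ Diversity D ∧ NoRestorationDomain D

/-- `a ≈ b`: the two alternatives are strongly connected in the domain `D`. -/
def StronglyConnected [NeZero m] (D : Set (Pref m)) (a b : Fin m) : Prop :=
  a ≠ b ∧ ∃ P ∈ D, ∃ P' ∈ D,
    P 0 = a ∧ P 1 = b ∧ P' 0 = b ∧ P' 1 = a ∧
    ∀ k : Fin m, 2 ≤ (k : ℕ) → P k = P' k

/-- `l` is a vertex-path of the graph `G_≈^B(D)`. -/
def IsVertexPathOn [NeZero m] (D : Set (Pref m)) (B : Set (Fin m)) (l : List (Fin m)) : Prop :=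
  l ≠ [] ∧ l.Nodup ∧ (∀ x ∈ l, x ∈ B) ∧ l.Chain' (StronglyConnected D)

/-- `l` is a vertex-path of `G_≈^B(D)` connecting `a` and `b`. -/
def VertexPathBetween [NeZero m] (D : Set (Pref m)) (B : Set (Fin m)) (a b : Fin m)
    (l : List (Fin m)) : Prop :=
  IsVertexPathOn D B l ∧ l.head? = some a ∧ l.getLast? = some b

/-- `a` is a leaf of the subgraph `G_≈^B(D)`. -/
def IsLeaf [NeZero m] (D : Set (Pref m)) (B : Set (Fin m)) (a : Fin m) : Prop :=
  a ∈ B ∧ ∃! b : Fin m, b ∈ B ∧ StronglyConnected D a b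

/-- Single-peakedness w.r.t. the natural order. -/
def SinglePeaked [NeZero m] (P : Pref m) : Prop :=
  ∀ a b : Fin m, ((a < b ∧ b < P 0) ∨ (P 0 < b ∧ b < a)) → Prefers P b a

/-- A `(p,q)`-hybrid preference (thresholds `p < q`, 0-based). -/
def IsHybridPref [NeZero m] (p q : Fin m) (P : Pref m) : Prop :=
  (∀ r s : Fin m, ((r ≤ p ∧ s ≤ p) ∨ (q ≤ r ∧ q ≤ s)) →
      ((r < s ∧ s < P 0) ∨ (P 0 < s ∧ s < r)) → Prefers P s r) ∧
  (P 0 ≤ p → ∀ l : Fin m, p ≤ l → l ≤ q → l ≠ p → Prefers P p l) ∧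
  (q ≤ P 0 → ∀ l : Fin m, p ≤ l → l ≤ q → l ≠ q → Prefers P q l)

/-- The `(p,q)`-hybrid domain of all `(p,q)`-hybrid preferences. -/
def hybridDomain [NeZero m] (p q : Fin m) : Set (Pref m) := {P | IsHybridPref p q P}

/-- `D` is a `(p,q)`-hybrid* domain. -/
def IsHybridStar [NeZero m] (D : Set (Pref m)) (p q : Fin m) : Prop :=
  D ⊆ hybridDomain p q ∧
  (∀ k : Fin m, k ≠ 0 → k ≠ lastAlt m →
      ∃ l, VertexPathBetween D Set.univ 0 (lastAlt m) l ∧ k ∈ l) ∧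
  ((p : ℕ) + 1 < (q : ℕ) → ∀ a : Fin m, ¬ IsLeaf D (Set.Icc p q) a)

/-- A lottery over the alternatives. -/
def Lottery (m : ℕ) : Type :=
  {f : Fin m → ℝ // (∀ a, 0 ≤ f a) ∧ ∑ a, f a = 1}

/-- The probability that a lottery assigns to a set of alternatives. -/
def Lottery.prob (lam : Lottery m) (B : Finset (Fin m)) : ℝ := ∑ a ∈ B, lam.1 a

/-- The support of a lottery. -/
def Lottery.supp (lam : Lottery m) : Finset (Fin m) :=
  Finset.univ.filter (fun a => 0 < lam.1 a)

/-- The degenerate lottery on `a`. -/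
def degLottery (a : Fin m) : Lottery m :=
  ⟨fun b => if b = a then 1 else 0,
   fun b => by by_cases h : b = a <;> simp [h],
   by simp⟩

/-- A profile of preferences drawn from the domain `D`. -/
abbrev Profile (D : Set (Pref m)) (n : ℕ) := Fin n → D

/-- The top-ranked alternative of a preference in the domain. -/
def topOf [NeZero m] {D : Set (Pref m)} (P : D) : Fin m := P.1 0

def Unanimous [NeZero m] {D : Set (Pref m)} (φ : Profile D n → Lottery m) : Prop :=
  ∀ (P : Profile D n) (a : Fin m), (∀ i, topOf (P i) = a) → φ P = degLottery a

/-- The total probability of the `k` top-ranked alternatives of `P` under `lam`. -/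
def topSum (lam : Lottery m) (P : Pref m) (k : ℕ) : ℝ :=
  ∑ t ∈ Finset.univ.filter (fun t : Fin m => (t : ℕ) < k), lam.1 (P t)

/-- Strategy-proofness: truth-telling first-order stochastically dominates any unilateral
misrepresentation. -/
def StrategyProof {D : Set (Pref m)} (φ : Profile D n → Lottery m) : Prop :=
  ∀ (i : Fin n) (P : Profile D n) (Pi' : D) (k : ℕ), k ≤ m →
    topSum (φ (Function.update P i Pi')) (P i).1 k ≤ topSum (φ P) (P i).1 k

def TopsOnly [NeZero m] {D : Set (Pref m)} (φ : Profile D n → Lottery m) : Prop :=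
  ∀ P P' : Profile D n, (∀ i, topOf (P i) = topOf (P' i)) → φ P = φ P'

def Anonymous {D : Set (Pref m)} (φ : Profile D n → Lottery m) : Prop :=
  ∀ (P : Profile D n) (σ : Equiv.Perm (Fin n)), φ (P ∘ σ) = φ P

/-- The interval `[a_k, a_m]`. -/
def upSet (k : Fin m) : Finset (Fin m) := Finset.univ.filter (fun a => k ≤ a)

/-- The interval `[a_1, a_k]`. -/
def downSet (k : Fin m) : Finset (Fin m) := Finset.univ.filter (fun a => a ≤ k)

/-- The interval `[a_p, a_q]`. -/
def midSet (p q : Fin m) : Finset (Fin m) := Finset.univ.filter (fun a => p ≤ a ∧ a ≤ q)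

/-- `S(k,P)`: the voters whose preference top is not to the left of `a_k`. -/
def voterSet [NeZero m] {D : Set (Pref m)} (P : Profile D n) (k : Fin m) : Finset (Fin n) :=
  Finset.univ.filter (fun i => k ≤ topOf (P i))

/-- `β_{S(k,P)}([a_k, a_m])`, with the convention that it is `0` for `k = m`. -/
def tailProb [NeZero m] {D : Set (Pref m)} (β : Finset (Fin n) → Lottery m)
    (P : Profile D n) (k : ℕ) : ℝ :=
  if h : k < m then (β (voterSet P ⟨k, h⟩)).prob (upSet ⟨k, h⟩) else 0

def BallotUnanimity [NeZero m] (β : Finset (Fin n) → Lottery m) : Prop :=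
  β Finset.univ = degLottery (lastAlt m) ∧ β ∅ = degLottery 0

def BallotMonotone (β : Finset (Fin n) → Lottery m) : Prop :=
  ∀ S T : Finset (Fin n), S ⊂ T →
    ∀ k : Fin m, (β S).prob (upSet k) ≤ (β T).prob (upSet k)

/-- `φ` is a probabilistic fixed ballot rule with probabilistic ballots `β`. -/
def IsPFBRWith [NeZero m] {D : Set (Pref m)} (φ : Profile D n → Lottery m)
    (β : Finset (Fin n) → Lottery m) : Prop :=
  BallotUnanimity β ∧ BallotMonotone β ∧
  ∀ (P : Profile D n) (k : Fin m),
    (φ P).1 k = tailProb β P (k : ℕ) - tailProb β P ((k : ℕ) + 1)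

def IsPFBR [NeZero m] {D : Set (Pref m)} (φ : Profile D n → Lottery m) : Prop :=
  ∃ β, IsPFBRWith φ β

/-- The constrained random-dictatorship condition w.r.t. `a_p` and `a_q`. -/
def ConstrainedRD (p q : Fin m) (β : Finset (Fin n) → Lottery m) : Prop :=
  ∃ ε : Fin n → ℝ, (∀ i, 0 ≤ ε i) ∧ ∑ i, ε i = 1 ∧
    ∀ S : Finset (Fin n),
      (β S).prob (upSet q) = ∑ i ∈ S, ε i ∧
      (β S).prob (downSet p) = ∑ i ∈ Sᶜ, ε i

/-- The constrained random-dictatorship condition w.r.t. `a_p` and `a_q` with every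
conditional dictatorial coefficient equal to `1/n`. -/
def ConstrainedRDUniform (p q : Fin m) (β : Finset (Fin n) → Lottery m) : Prop :=
  ∀ S : Finset (Fin n),
    (β S).prob (upSet q) = (S.card : ℝ) / (n : ℝ) ∧
    (β S).prob (downSet p) = ((Sᶜ : Finset (Fin n)).card : ℝ) / (n : ℝ)

/-- Anonymity at the level of probabilistic ballots. -/
def BallotAnonymous (β : Finset (Fin n) → Lottery m) : Prop :=
  ∀ S S' : Finset (Fin n), S.Nonempty → S'.Nonempty → S.card = S'.card → β S = β S'

/-- Per-capita monotonicity w.r.t. `a_p` and `a_q`. -/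
def PerCapitaMonotone (p q : Fin m) (β : Finset (Fin n) → Lottery m) : Prop :=
  ∀ S S' : Finset (Fin n), S.Nonempty → S ⊂ S' → S' ⊂ Finset.univ →
    (∀ t : Fin m, q ≤ t →
      (β S).prob (upSet t) / (S.card : ℝ) ≤ (β S').prob (upSet t) / (S'.card : ℝ)) ∧
    (∀ s : Fin m, s ≤ p →
      (β Sᶜ).prob (downSet s) / (S.card : ℝ) ≤ (β S'ᶜ).prob (downSet s) / (S'.card : ℝ))

/-- Decomposability: `φ` is a mixture of finitely many unanimous and strategy-proof
deterministic social choice functions. -/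
def Decomposable [NeZero m] {D : Set (Pref m)} (φ : Profile D n → Lottery m) : Prop :=
  ∃ (r : ℕ) (f : Fin r → (Profile D n → Fin m)) (α : Fin r → ℝ),
    (∀ k, 0 < α k) ∧ ∑ k, α k = 1 ∧
    (∀ k, Unanimous (fun P => degLottery (f k P)) ∧
          StrategyProof (fun P => degLottery (f k P))) ∧
    ∀ (P : Profile D n) (a : Fin m),
      (φ P).1 a = ∑ k, α k * (if f k P = a then 1 else 0)

/-- `b̂_S^R`: the `≺`-minimum of `supp(β_S) ∩ R` (with the convention `b̂_N^R = a_m`). -/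
def bR [NeZero m] (β : Finset (Fin n) → Lottery m) (q : Fin m) (S : Finset (Fin n)) : Fin m :=
  if h : ((β S).supp ∩ upSet q).Nonempty then ((β S).supp ∩ upSet q).min' h else lastAlt m

/-- `b̂_S^L`: the `≺`-maximum of `supp(β_S) ∩ L` (with the convention `b̂_∅^L = a_1`). -/
def bL [NeZero m] (β : Finset (Fin n) → Lottery m) (p : Fin m) (S : Finset (Fin n)) : Fin m :=
  if h : ((β S).supp ∩ downSet p).Nonempty then ((β S).supp ∩ downSet p).max' h else 0

/-- `α = min over nonempty S ⊂ N of min(β_S(b̂_S^R)/|S|, β_S(b̂_S^L)/(n-|S|))`. -/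
def alphaVal [NeZero m] (β : Finset (Fin n) → Lottery m) (p q : Fin m) : ℝ :=
  sInf {x : ℝ | ∃ S : Finset (Fin n), S.Nonempty ∧ S ≠ Finset.univ ∧
    x = min ((β S).1 (bR β q S) / (S.card : ℝ))
            ((β S).1 (bL β p S) / ((n : ℝ) - (S.card : ℝ)))}

/-- `γ_S = (|S|/n) e_{b̂_S^R} + ((n-|S|)/n) e_{b̂_S^L}`, pointwise. -/
def gammaFun [NeZero m] (β : Finset (Fin n) → Lottery m) (p q : Fin m)
    (S : Finset (Fin n)) (a : Fin m) : ℝ :=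
  ((S.card : ℝ) / (n : ℝ)) * (if a = bR β q S then 1 else 0)
  + (((n : ℝ) - (S.card : ℝ)) / (n : ℝ)) * (if a = bL β p S then 1 else 0)

/-- The max-min formula `f(P) = max_{S ⊆ N} min({r_1(P_j) : j ∈ S} ∪ {b_S})`. -/
def fbrOutcome [NeZero m] {D : Set (Pref m)} (b : Finset (Fin n) → Fin m)
    (P : Profile D n) : Fin m :=
  Finset.univ.sup' Finset.univ_nonempty
    (fun S : Finset (Fin n) =>
      (insert (b S) (S.image (fun j => topOf (P j)))).inf' (Finset.insert_nonempty _ _) id)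

/-- `f` is a `(p,q)`-fixed ballot rule with deterministic ballots `b` and constrained
dictator `i`. -/
def IsFBRWith [NeZero m] {D : Set (Pref m)} (p q : Fin m) (f : Profile D n → Fin m)
    (b : Finset (Fin n) → Fin m) (i : Fin n) : Prop :=
  b Finset.univ = lastAlt m ∧ b ∅ = 0 ∧
  (∀ S T : Finset (Fin n), S ⊂ T → b S ≤ b T) ∧
  (∀ S : Finset (Fin n), (i ∈ S → q ≤ b S) ∧ (i ∉ S → b S ≤ p)) ∧
  ∀ P : Profile D n, f P = fbrOutcome b P

end PFBRPaper

open PFBRPaper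

namespace HybPf

variable {m n : ℕ}

lemma prefers_trans {P : Pref m} {a b c : Fin m} (h1 : Prefers P a b) (h2 : Prefers P b c) :
    Prefers P a c := lt_trans h1 h2

lemma prefers_asymm {P : Pref m} {a b : Fin m} (h1 : Prefers P a b) (h2 : Prefers P b a) :
    False := lt_asymm h1 h2

lemma prefers_total {P : Pref m} {a b : Fin m} (h : a ≠ b) : Prefers P a b ∨ Prefers P b a := by
  unfold Prefers
  exact lt_or_gt_of_ne (fun e => h (P.symm.injective e))

/-- Every injective utility (lower is better) is realised by a preference. -/
lemma exists_pref (f : Fin m → ℕ) (hf : Function.Injective f) :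
    ∃ P : Pref m, ∀ a b, Prefers P a b ↔ f a < f b := by
  have hmono : StrictMono (f ∘ Tuple.sort f) :=
    (Tuple.monotone_sort f).strictMono_of_injective (hf.comp (Tuple.sort f).injective)
  refine ⟨Tuple.sort f, fun a b => ?_⟩
  unfold Prefers
  rw [← hmono.lt_iff_lt]
  simp

/-- Upper contour sets. -/
def IsUp (P : Pref m) (U : Finset (Fin m)) : Prop := ∀ a ∈ U, ∀ b ∉ U, Prefers P a b

lemma topSum_eq (lam : Lottery m) {P : Pref m} {U : Finset (Fin m)} (h : IsUp P U) :
    topSum lam P U.card = lam.prob U := by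
  -- the image of U under P.symm is an initial segment
  have key : U.map P.symm.toEmbedding = Finset.univ.filter (fun t : Fin m => (t : ℕ) < U.card) := by
    have hle : U.card ≤ m := by simpa using Finset.card_le_univ U
    have hc2 : (Finset.univ.filter (fun t : Fin m => (t : ℕ) < U.card)).card = U.card := by
      rw [Fin.card_filter_val_lt]; omega
    symm
    apply Finset.eq_of_subset_of_card_le
    · intro t ht
      simp only [Finset.mem_filter, Finset.mem_univ, true_and] at ht
      by_contra hn
      have hn' : P t ∉ U := by
        intro h'
        apply hn
        simp only [Finset.mem_map, Equiv.coe_toEmbedding]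
        exact ⟨P t, h', by simp⟩
      have hsub : U.map P.symm.toEmbedding ⊆ Finset.univ.filter (fun s : Fin m => (s : ℕ) < (t:ℕ)) := by
        intro s hs
        simp only [Finset.mem_map, Equiv.coe_toEmbedding] at hs
        obtain ⟨a, ha, rfl⟩ := hs
        have := h a ha _ hn'
        unfold Prefers at this
        simp only [Equiv.symm_apply_apply] at this
        simpa using this
      have := Finset.card_le_card hsub
      rw [Finset.card_map, Fin.card_filter_val_lt] at this
      omega
    · rw [Finset.card_map, hc2]
  unfold topSum Lottery.prob
  rw [← key, Finset.sum_map]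
  simp

lemma isUp_le (P : Pref m) (x : Fin m) :
    IsUp P (Finset.univ.filter (fun z => P.symm z ≤ P.symm x)) := by
  intro a ha b hb
  simp only [Finset.mem_filter, Finset.mem_univ, true_and] at ha hb
  exact lt_of_le_of_lt ha (not_le.mp hb)

lemma isUp_lt (P : Pref m) (x : Fin m) :
    IsUp P (Finset.univ.filter (fun z => P.symm z < P.symm x)) := by
  intro a ha b hb
  simp only [Finset.mem_filter, Finset.mem_univ, true_and] at ha hb
  exact lt_of_lt_of_le ha (not_lt.mp hb)

/-- Voter by voter replacement. -/
lemma one_by_one {D X : Type*} (F : (Fin n → D) → X) (r : X → X → Prop)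
    (hrefl : ∀ x, r x x) (htrans : ∀ x y z, r x y → r y z → r x z)
    (R : D → D → Prop)
    (hstep : ∀ (P : Fin n → D) i d, R (P i) d → r (F P) (F (Function.update P i d)))
    (P P' : Fin n → D) (h : ∀ i, R (P i) (P' i)) : r (F P) (F P') := by
  classical
  have key : ∀ S : Finset (Fin n), r (F P) (F (fun i => if i ∈ S then P' i else P i)) := by
    intro S
    induction S using Finset.induction_on with
    | empty => simpa using hrefl _
    | insert a S ha ih =>
      refine htrans _ _ _ ih ?_
      have e : (fun i => if i ∈ insert a S then P' i else P i)
          = Function.update (fun i => if i ∈ S then P' i else P i) a (P' a) := by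
        funext i
        by_cases hi : i = a
        · subst hi; simp
        · simp [hi]
      rw [e]
      apply hstep
      simpa [ha] using h a
  simpa using key Finset.univ

lemma sp_up {D : Set (Pref m)} {φ : Profile D n → Lottery m} (hsp : StrategyProof φ)
    (P : Profile D n) (i : Fin n) (d : D) {U : Finset (Fin m)} (hU : IsUp (P i).1 U) :
    (φ (Function.update P i d)).prob U ≤ (φ P).prob U := by
  rw [← topSum_eq _ hU, ← topSum_eq _ hU]
  exact hsp i P d _ (by simpa using Finset.card_le_univ U)

lemma sp_up_eq {D : Set (Pref m)} {φ : Profile D n → Lottery m} (hsp : StrategyProof φ)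
    (P : Profile D n) (i : Fin n) (d : D) {U : Finset (Fin m)} (hU : IsUp (P i).1 U)
    (hU' : IsUp d.1 U) :
    (φ P).prob U = (φ (Function.update P i d)).prob U := by
  apply le_antisymm
  · have := sp_up hsp (Function.update P i d) i (P i) (U := U) (by simpa using hU')
    simpa using this
  · exact sp_up hsp P i d hU

/-- The ranking constraints imposed by the hybrid domain on a preference with top `a`:
`s` must be ranked above `r`. -/
def C (p q a s r : Fin m) : Prop :=
  (s = a ∧ r ≠ a) ∨
  (((r ≤ p ∧ s ≤ p) ∨ (q ≤ r ∧ q ≤ s)) ∧ ((r < s ∧ s < a) ∨ (a < s ∧ s < r))) ∨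
  (a ≤ p ∧ p ≤ r ∧ r ≤ q ∧ r ≠ p ∧ s = p) ∨
  (q ≤ a ∧ p ≤ r ∧ r ≤ q ∧ r ≠ q ∧ s = q)

lemma top_iff [NeZero m] (P : Pref m) (a : Fin m) : P 0 = a ↔ ∀ z, z ≠ a → Prefers P a z := by
  constructor
  · rintro rfl z hz
    unfold Prefers
    rw [Equiv.symm_apply_apply]
    rw [Fin.lt_def, Fin.val_zero, Nat.pos_iff_ne_zero]
    intro h
    apply hz
    have h' : P.symm z = 0 := Fin.ext (by simpa using h)
    rw [← h']; simp
  · intro h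
    by_contra hne
    have := h _ hne
    unfold Prefers at this
    rw [Equiv.symm_apply_apply] at this
    exact absurd this (by simp)

lemma mem_iff [NeZero m] {p q : Fin m} (P : Pref m) (a : Fin m) :
    (P ∈ hybridDomain p q ∧ P 0 = a) ↔ ∀ s r, C p q a s r → Prefers P s r := by
  constructor
  · rintro ⟨⟨h1, h2, h3⟩, h0⟩ s r hC
    rcases hC with ⟨rfl, hr⟩ | ⟨ha, hb⟩ | ⟨ha, hb, hc, hd, rfl⟩ | ⟨ha, hb, hc, hd, rfl⟩
    · exact (top_iff P s).1 h0 r hr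
    · subst h0; exact h1 r s ha hb
    · subst h0; exact h2 ha r hb hc hd
    · subst h0; exact h3 ha r hb hc hd
  · intro h
    have h0 : P 0 = a := (top_iff P a).2 (fun z hz => h a z (Or.inl ⟨rfl, hz⟩))
    refine ⟨⟨?_, ?_, ?_⟩, h0⟩
    · intro r s ha hb
      rw [h0] at hb
      exact h s r (Or.inr (Or.inl ⟨ha, hb⟩))
    · intro ha l h1 h2 h3
      rw [h0] at ha
      exact h p l (Or.inr (Or.inr (Or.inl ⟨ha, h1, h2, h3, rfl⟩)))
    · intro ha l h1 h2 h3
      rw [h0] at ha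
      exact h q l (Or.inr (Or.inr (Or.inr ⟨ha, h1, h2, h3, rfl⟩)))

/-- Bring a set `W` to the front, keeping the order within and outside `W`. -/
lemma exists_bring (P : Pref m) (W : Finset (Fin m)) : ∃ Q : Pref m, ∀ a b,
    Prefers Q a b ↔ ((a ∈ W ∧ b ∉ W) ∨ ((a ∈ W ↔ b ∈ W) ∧ Prefers P a b)) := by
  classical
  obtain ⟨Q, hQ⟩ := exists_pref (fun a => (if a ∈ W then 0 else m) + (P.symm a : ℕ)) (by
    intro a b hab
    have ha := (P.symm a).isLt
    have hb := (P.symm b).isLt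
    apply P.symm.injective
    apply Fin.ext
    simp only at hab
    split_ifs at hab <;> omega)
  refine ⟨Q, fun a b => ?_⟩
  rw [hQ]
  unfold Prefers
  have ha := (P.symm a).isLt
  have hb := (P.symm b).isLt
  rw [Fin.lt_def]
  by_cases h1 : a ∈ W <;> by_cases h2 : b ∈ W <;> simp [h1, h2] <;> omega

/-- Same-side relation: the two preferences share an upper contour set containing `x`, not `y`. -/
def E (D : Set (Pref m)) (x y : Fin m) (P Q : D) : Prop :=
  ∃ U : Finset (Fin m), x ∈ U ∧ y ∉ U ∧ IsUp P.1 U ∧ IsUp Q.1 U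

lemma same_top [NeZero m] {p q : Fin m} {x y : Fin m} (P Q : hybridDomain p q)
    (h0 : P.1 0 = Q.1 0) (hP : Prefers P.1 x y) (hQ : Prefers Q.1 x y) :
    Relation.EqvGen (E (hybridDomain p q) x y) P Q := by
  classical
  set a := Q.1 0 with ha
  have cP := (mem_iff P.1 a).1 ⟨P.2, h0⟩
  have cQ := (mem_iff Q.1 a).1 ⟨Q.2, rfl⟩
  set U1 := Finset.univ.filter (fun z => P.1.symm z ≤ P.1.symm x) with hU1
  set U2 := Finset.univ.filter (fun z => Q.1.symm z ≤ Q.1.symm x) with hU2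
  have u1 : IsUp P.1 U1 := isUp_le P.1 x
  have u2 : IsUp Q.1 U2 := isUp_le Q.1 x
  have x1 : x ∈ U1 := by simp [hU1]
  have x2 : x ∈ U2 := by simp [hU2]
  have y1 : y ∉ U1 := by simpa [hU1, Prefers] using hP
  have y2 : y ∉ U2 := by simpa [hU2, Prefers] using hQ
  set W := U1 ∪ U2 with hW
  have cW : ∀ s r, C p q a s r → r ∈ W → s ∈ W := by
    intro s r hC hr
    rw [hW, Finset.mem_union] at hr ⊢
    rcases hr with hr | hr
    · left; by_contra hs; exact prefers_asymm (u1 r hr s hs) (cP s r hC)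
    · right; by_contra hs; exact prefers_asymm (u2 r hr s hs) (cQ s r hC)
  obtain ⟨R1, hR1⟩ := exists_bring P.1 W
  obtain ⟨R2, hR2⟩ := exists_bring Q.1 W
  have m1 : R1 ∈ hybridDomain p q := ((mem_iff R1 a).2 (fun s r hC => by
    rw [hR1]
    have h1 := cW s r hC
    have h2 := cP s r hC
    tauto)).1
  have m2 : R2 ∈ hybridDomain p q := ((mem_iff R2 a).2 (fun s r hC => by
    rw [hR2]
    have h1 := cW s r hC
    have h2 := cQ s r hC
    tauto)).1
  have e1 : E (hybridDomain p q) x y P ⟨R1, m1⟩ := by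
    refine ⟨U1, x1, y1, u1, ?_⟩
    intro s hs r hr
    have : s ∈ W := Finset.mem_union_left _ hs
    have h2 := u1 s hs r hr
    show Prefers R1 s r
    rw [hR1]; tauto
  have e2 : E (hybridDomain p q) x y Q ⟨R2, m2⟩ := by
    refine ⟨U2, x2, y2, u2, ?_⟩
    intro s hs r hr
    have : s ∈ W := Finset.mem_union_right _ hs
    have h2 := u2 s hs r hr
    show Prefers R2 s r
    rw [hR2]; tauto
  have e3 : E (hybridDomain p q) x y ⟨R1, m1⟩ ⟨R2, m2⟩ := by
    refine ⟨W, Finset.mem_union_left _ x1, by simp [hW, y1, y2], ?_, ?_⟩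
    · intro s hs r hr
      show Prefers R1 s r
      rw [hR1]; tauto
    · intro s hs r hr
      show Prefers R2 s r
      rw [hR2]; tauto
  exact ((Relation.EqvGen.rel _ _ e1).trans _ _ _ (Relation.EqvGen.rel _ _ e3)).trans _ _ _
    ((Relation.EqvGen.rel _ _ e2).symm _ _)

/-- adjacency between tops -/
def Edge (p q c c' : Fin m) : Prop :=
  (c : ℕ) + 1 = c' ∨ (c' : ℕ) + 1 = c ∨ (p ≤ c ∧ c ≤ q ∧ p ≤ c' ∧ c' ≤ q)

lemma Edge.symm {p q c c' : Fin m} (h : Edge p q c c') : Edge p q c' c := by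
  unfold Edge at *; tauto

lemma C_top1 {p q : Fin m} (hpq : (p : ℕ) + 1 < q) {c s : Fin m} : ¬ C p q c s c := by
  intro hC
  unfold C at hC
  simp only [Fin.lt_def, Fin.le_def, Fin.ext_iff, ne_eq, not_true_eq_false, and_false,
    false_or] at hC
  omega

lemma C_top2 {p q : Fin m} (hpq : (p : ℕ) + 1 < q) {c c' s : Fin m}
    (he : Edge p q c c') (hcc : c ≠ c') (hC : C p q c s c') : s = c := by
  unfold C at hC; unfold Edge at he
  simp only [Fin.lt_def, Fin.le_def, Fin.ext_iff, ne_eq] at *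
  omega

lemma C_edge {p q : Fin m} (hpq : (p : ℕ) + 1 < q) {c c' s r : Fin m}
    (he : Edge p q c c') (hcc : c ≠ c') (hC : C p q c' s r) (h1 : s ≠ c) (h2 : s ≠ c')
    (h3 : r ≠ c) (h4 : r ≠ c') : C p q c s r := by
  unfold C at hC ⊢; unfold Edge at he
  simp only [Fin.lt_def, Fin.le_def, Fin.ext_iff, ne_eq] at *
  omega

lemma step_top [NeZero m] {p q : Fin m} (hpq : (p : ℕ) + 1 < q) {x y c c' : Fin m}
    (he : Edge p q c c') (hcc : c ≠ c') (hy : c' ≠ y)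
    (P : hybridDomain p q) (h0 : P.1 0 = c) (hP : Prefers P.1 x y) :
    ∃ Q : hybridDomain p q, Q.1 0 = c' ∧ Prefers Q.1 x y ∧
      Relation.EqvGen (E (hybridDomain p q) x y) P Q := by
  classical
  have cP := (mem_iff P.1 c).1 ⟨P.2, h0⟩
  have htop := (top_iff P.1 c).1 h0
  have hyc : y ≠ c := by
    rintro rfl
    by_cases hxy : x = y
    · subst hxy; exact prefers_asymm hP hP
    · exact prefers_asymm hP (htop x hxy)
  have hxy : x ≠ y := by rintro rfl; exact prefers_asymm hP hP
  obtain ⟨R, hR⟩ := exists_bring P.1 {c, c'}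
  obtain ⟨R', hR'⟩ := exists_bring P.1 {c'}
  simp only [Finset.mem_insert, Finset.mem_singleton] at hR hR'
  have A1 := fun s => C_top2 hpq he hcc (s := s)
  have A2 := fun s => C_top2 hpq he.symm hcc.symm (s := s)
  have A3 := fun s => C_top1 hpq (c := c') (s := s)
  have A4 := fun s r => C_edge hpq he hcc (s := s) (r := r)
  have A5 := fun s => C_top1 hpq (c := c) (s := s)
  have m1 := (mem_iff R c).2 (fun s r hC => by
    rw [hR]
    have h1 := cP s r hC
    by_cases hr : r = c'
    · subst hr
      have := A1 s hC
      subst this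
      tauto
    · by_cases hr2 : r = c
      · subst hr2; exact absurd hC (A5 s)
      · tauto)
  have m2 := (mem_iff R' c').2 (fun s r hC => by
    rw [hR']
    by_cases hr : r = c'
    · subst hr; exact absurd hC (A3 s)
    · by_cases hr2 : r = c
      · subst hr2
        have := A2 s hC
        tauto
      · by_cases hs : s = c'
        · tauto
        · by_cases hs2 : s = c
          · subst hs2
            have := htop r hr2
            tauto
          · have := cP s r (A4 s r hC hs2 hs hr2 hr)
            tauto)
  have pR : Prefers R x y := by
    rw [hR]; tauto
  have pR' : Prefers R' x y := by
    rw [hR']; tauto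
  refine ⟨⟨R', m2.1⟩, m2.2, pR', ?_⟩
  refine (same_top P ⟨R, m1.1⟩ (by rw [h0]; exact m1.2.symm) hP pR).trans _ _ _ ?_
  apply Relation.EqvGen.rel
  refine ⟨Finset.univ.filter (fun z => P.1.symm z ≤ P.1.symm x) ∪ {c, c'}, by simp, ?_, ?_, ?_⟩
  · simp only [Finset.mem_union, Finset.mem_filter, Finset.mem_univ, true_and, Finset.mem_insert,
      Finset.mem_singleton, not_or]
    exact ⟨not_le.2 hP, hyc, fun h => hy h.symm⟩
  · intro s hs r hr
    show Prefers R s r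
    simp only [Finset.mem_union, Finset.mem_filter, Finset.mem_univ, true_and, Finset.mem_insert,
      Finset.mem_singleton, not_or, not_le] at hs hr
    rw [hR]
    by_cases h1 : s = c ∨ s = c'
    · tauto
    · have : Prefers P.1 s r := lt_of_le_of_lt (by tauto) hr.1
      tauto
  · intro s hs r hr
    show Prefers R' s r
    simp only [Finset.mem_union, Finset.mem_filter, Finset.mem_univ, true_and, Finset.mem_insert,
      Finset.mem_singleton, not_or, not_le] at hs hr
    rw [hR']
    by_cases h1 : s = c'
    · tauto
    · by_cases h2 : s = c
      · subst h2
        have := htop r hr.2.1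
        tauto
      · have : Prefers P.1 s r := lt_of_le_of_lt (by tauto) hr.1
        tauto

end HybPf

namespace HybPf

variable {m n : ℕ}

lemma walk [NeZero m] {p q : Fin m} (hpq : (p : ℕ) + 1 < q) {x y : Fin m}
    (P : hybridDomain p q) (hP : Prefers P.1 x y) (d : ℕ) :
    ∀ c' : Fin m, ((P.1 0 : Fin m) : ℕ) + d = c' → (∀ z, P.1 0 ≤ z → z ≤ c' → z ≠ y) →
    ∃ Q : hybridDomain p q, Q.1 0 = c' ∧ Prefers Q.1 x y ∧
      Relation.EqvGen (E (hybridDomain p q) x y) P Q := by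
  induction d with
  | zero =>
    intro c' h _
    exact ⟨P, Fin.ext (by simpa using h), hP, Relation.EqvGen.refl _⟩
  | succ d ih =>
    intro c' h hy
    obtain ⟨Q, h1, h2, h3⟩ := ih ⟨(P.1 0 : Fin m) + d, by omega⟩ rfl (by
      intro z hz hz'
      refine hy z hz ?_
      rw [Fin.le_def] at hz' ⊢
      simp only at hz'
      omega)
    obtain ⟨Q', h1', h2', h3'⟩ := step_top (c := ⟨(P.1 0 : Fin m) + d, by omega⟩) (c' := c') hpq
      (Or.inl (by simp only; omega))
      (by rw [ne_eq, Fin.ext_iff]; simp only; omega)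
      (hy c' (by rw [Fin.le_def]; omega) le_rfl) Q h1 h2
    exact ⟨Q', h1', h2', h3.trans _ _ _ h3'⟩

lemma connect_aux [NeZero m] {p q : Fin m} (hpq : (p : ℕ) + 1 < q) {x y : Fin m}
    (P Q : hybridDomain p q) (hP : Prefers P.1 x y) (hQ : Prefers Q.1 x y)
    (hle : P.1 0 ≤ Q.1 0) :
    Relation.EqvGen (E (hybridDomain p q) x y) P Q := by
  have hxy : x ≠ y := by rintro rfl; exact prefers_asymm hP hP
  have cP := (mem_iff P.1 _).1 ⟨P.2, rfl⟩
  have cQ := (mem_iff Q.1 _).1 ⟨Q.2, rfl⟩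
  have tP : P.1 0 ≠ y := fun h => prefers_asymm hP ((top_iff P.1 y).1 h x hxy)
  have tQ : Q.1 0 ≠ y := fun h => prefers_asymm hQ ((top_iff Q.1 y).1 h x hxy)
  by_cases hbtw : P.1 0 < y ∧ y < Q.1 0
  · obtain ⟨hay, hyb⟩ := hbtw
    by_cases hyp : y ≤ p
    · exfalso
      rcases lt_or_gt_of_ne hxy with h | h
      · exact prefers_asymm hQ (cQ y x (Or.inr (Or.inl
          ⟨Or.inl ⟨h.le.trans hyp, hyp⟩, Or.inl ⟨h, hyb⟩⟩)))
      · refine prefers_asymm hP ?_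
        by_cases hx : x ≤ p
        · exact cP y x (Or.inr (Or.inl ⟨Or.inl ⟨hx, hyp⟩, Or.inr ⟨hay, h⟩⟩))
        · have hap : P.1 0 ≤ p := (hay.trans_le hyp).le
          have hpx : Prefers P.1 p x := by
            by_cases hx' : x ≤ q
            · exact cP p x (Or.inr (Or.inr (Or.inl
                ⟨hap, (not_le.1 hx).le, hx', fun e => hx e.le, rfl⟩)))
            · have hpq' : p < q := by rw [Fin.lt_def]; omega
              refine prefers_trans (b := q) (cP p q (Or.inr (Or.inr (Or.inl
                ⟨hap, hpq'.le, le_rfl, hpq'.ne', rfl⟩)))) ?_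
              exact cP q x (Or.inr (Or.inl ⟨Or.inr ⟨(not_le.1 hx').le, le_rfl⟩,
                Or.inr ⟨hap.trans_lt hpq', not_le.1 hx'⟩⟩))
          rcases hyp.eq_or_lt with rfl | hyp'
          · exact hpx
          · exact prefers_trans (cP y p (Or.inr (Or.inl ⟨Or.inl ⟨le_rfl, hyp⟩,
              Or.inr ⟨hay, hyp'⟩⟩))) hpx
    by_cases hyq : q ≤ y
    · exfalso
      rcases lt_or_gt_of_ne hxy with h | h
      · refine prefers_asymm hQ ?_
        by_cases hx : q ≤ x
        · exact cQ y x (Or.inr (Or.inl ⟨Or.inr ⟨hx, hyq⟩, Or.inl ⟨h, hyb⟩⟩))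
        · have hqb : q ≤ Q.1 0 := (hyq.trans_lt hyb).le
          have hqx : Prefers Q.1 q x := by
            by_cases hx' : p ≤ x
            · exact cQ q x (Or.inr (Or.inr (Or.inr
                ⟨hqb, hx', (not_le.1 hx).le, fun e => hx e.ge, rfl⟩)))
            · have hpq' : p < q := by rw [Fin.lt_def]; omega
              refine prefers_trans (b := p) (cQ q p (Or.inr (Or.inr (Or.inr
                ⟨hqb, le_rfl, hpq'.le, hpq'.ne, rfl⟩)))) ?_
              exact cQ p x (Or.inr (Or.inl ⟨Or.inl ⟨(not_le.1 hx').le, le_rfl⟩,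
                Or.inl ⟨not_le.1 hx', hpq'.trans_le hqb⟩⟩))
          rcases hyq.eq_or_lt with rfl | hyq'
          · exact hqx
          · exact prefers_trans (cQ y q (Or.inr (Or.inl ⟨Or.inr ⟨le_rfl, hyq⟩,
              Or.inl ⟨hyq', hyb⟩⟩))) hqx
      · exact prefers_asymm hP (cP y x (Or.inr (Or.inl
          ⟨Or.inr ⟨hyq.trans h.le, hyq⟩, Or.inr ⟨hay, h⟩⟩)))
    · rw [Fin.le_def] at hyp hyq
      rw [Fin.lt_def] at hay hyb
      have hQm := (Q.1 0).isLt
      obtain ⟨R, hR0, hR, eR⟩ := walk hpq P hP ((y : ℕ) - 1 - (P.1 0 : Fin m))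
        ⟨(y : ℕ) - 1, by omega⟩ (by simp only; omega) (by
          rintro z - hz rfl
          rw [Fin.le_def] at hz
          simp only at hz
          omega)
      obtain ⟨R', hR0', hR', eR'⟩ := step_top (c := ⟨(y : ℕ) - 1, by omega⟩)
        (c' := ⟨(y : ℕ) + 1, by omega⟩) hpq
        (Or.inr (Or.inr (by simp only [Fin.le_def]; omega)))
        (by rw [ne_eq, Fin.ext_iff]; simp only; omega)
        (by rw [ne_eq, Fin.ext_iff]; simp only; omega) R hR0 hR
      have hv : ((R'.1 0 : Fin m) : ℕ) = y + 1 := by rw [hR0']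
      obtain ⟨R2, hR20, hR2, eR2⟩ := walk hpq R' hR' ((Q.1 0 : Fin m) - ((y : ℕ) + 1))
        (Q.1 0) (by omega) (by
          rintro z hz - rfl
          rw [Fin.le_def] at hz
          omega)
      exact ((eR.trans _ _ _ eR').trans _ _ _ eR2).trans _ _ _ (same_top R2 Q hR20 hR2 hQ)
  · obtain ⟨R, hR0, hR, eR⟩ := walk hpq P hP ((Q.1 0 : Fin m) - (P.1 0 : Fin m)) (Q.1 0)
      (by rw [Fin.le_def] at hle; omega) (by
        rintro z h1 h2 rfl
        exact hbtw ⟨lt_of_le_of_ne h1 tP, lt_of_le_of_ne h2 (Ne.symm tQ)⟩)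
    exact eR.trans _ _ _ (same_top R Q hR0 hR hQ)

lemma connect [NeZero m] {p q : Fin m} (hpq : (p : ℕ) + 1 < q) {x y : Fin m}
    (P Q : hybridDomain p q) (hP : Prefers P.1 x y) (hQ : Prefers Q.1 x y) :
    Relation.EqvGen (E (hybridDomain p q) x y) P Q := by
  rcases le_total (P.1 0) (Q.1 0) with h | h
  · exact connect_aux hpq P Q hP hQ h
  · exact (connect_aux hpq Q P hQ hP h).symm _ _

/-- `A` and `B` differ exactly in the ranking of the pair `x, y`. -/
def Adj (A B : Pref m) (x y : Fin m) : Prop :=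
  Prefers A x y ∧ Prefers B y x ∧
  ∀ s r, ¬ (s = x ∧ r = y) → ¬ (s = y ∧ r = x) → (Prefers A s r ↔ Prefers B s r)

lemma exists_adj (A B : Pref m) (h : A ≠ B) :
    ∃ x y A', Adj A A' x y ∧ Prefers B y x := by
  cases m with
  | zero => exact absurd (Equiv.ext (fun x => x.elim0)) h
  | succ k =>
    by_cases hm : ∀ i : Fin k, B.symm (A i.castSucc) < B.symm (A i.succ)
    · exfalso
      have hs : StrictMono (fun i => B.symm (A i)) := Fin.strictMono_iff_lt_succ.2 hm
      have hid : (fun i => B.symm (A i)) = id := by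
        refine (StrictMono.range_inj hs strictMono_id).1 ?_
        rw [Set.range_id]
        exact (A.trans B.symm).surjective.range_eq
      apply h
      ext1 i
      have := congrFun hid i
      simpa [Equiv.symm_apply_eq] using this
    · push Not at hm
      obtain ⟨i, hi⟩ := hm
      refine ⟨A i.castSucc, A i.succ, (Equiv.swap i.castSucc i.succ).trans A,
        ⟨?_, ?_, ?_⟩, ?_⟩
      · unfold Prefers
        simp [Fin.lt_def]
      · unfold Prefers
        simp [Fin.lt_def]
      · intro s r h1 h2
        unfold Prefers
        obtain ⟨u, rfl⟩ := A.surjective s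
        obtain ⟨v, rfl⟩ := A.surjective r
        simp only [EmbeddingLike.apply_eq_iff_eq] at h1 h2
        simp only [Equiv.symm_trans_apply, Equiv.symm_apply_apply, Equiv.symm_swap,
          Equiv.swap_apply_def]
        simp only [Fin.ext_iff, Fin.val_castSucc, Fin.val_succ] at h1 h2 ⊢
        split_ifs <;> simp only [Fin.lt_def, Fin.val_castSucc, Fin.val_succ] <;> omega
      · refine lt_of_le_of_ne hi ?_
        intro e
        have := A.injective (B.symm.injective e)
        simp [Fin.ext_iff] at this

lemma prob_split (lam : Lottery m) (P : Pref m) (z : Fin m) :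
    lam.1 z = lam.prob (Finset.univ.filter (fun s => P.symm s ≤ P.symm z))
      - lam.prob (Finset.univ.filter (fun s => P.symm s < P.symm z)) := by
  classical
  have : Finset.univ.filter (fun s => P.symm s ≤ P.symm z)
      = insert z (Finset.univ.filter (fun s => P.symm s < P.symm z)) := by
    ext s
    simp only [Finset.mem_filter, Finset.mem_univ, true_and, Finset.mem_insert]
    rw [le_iff_eq_or_lt, P.symm.injective.eq_iff]
  rw [this]
  unfold Lottery.prob
  rw [Finset.sum_insert (by simp)]
  ring

lemma adj_zero {D : Set (Pref m)} {φ : Profile D n → Lottery m} (hsp : StrategyProof φ)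
    {x y : Fin m} (A B : D) (hadj : Adj A.1 B.1 x y) (i : Fin n) (Q : Profile D n)
    (z : Fin m) (hzx : z ≠ x) (hzy : z ≠ y) :
    (φ (Function.update Q i A)).1 z = (φ (Function.update Q i B)).1 z := by
  obtain ⟨h1, h2, h3⟩ := hadj
  have key : ¬ (Prefers A.1 x z ∧ Prefers A.1 z y) := by
    rintro ⟨ha, hb⟩
    rw [h3 _ _ (by tauto) (by tauto)] at ha
    rw [h3 _ _ (by tauto) (by tauto)] at hb
    exact prefers_asymm h2 (prefers_trans ha hb)
  have e1 : ∀ U, IsUp A.1 U → IsUp B.1 U →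
      (φ (Function.update Q i A)).prob U = (φ (Function.update Q i B)).prob U := by
    intro U hA hB
    have := sp_up_eq hsp (Function.update Q i A) i B (U := U) (by simpa using hA) hB
    simpa using this
  have e2 : ∀ U, IsUp A.1 U → ¬ (x ∈ U ∧ y ∉ U) → IsUp B.1 U := by
    intro U hA hn s hs r hr
    have := hA s hs r hr
    rw [← h3]
    · exact this
    · rintro ⟨rfl, rfl⟩; exact hn ⟨hs, hr⟩
    · rintro ⟨rfl, rfl⟩; exact prefers_asymm h1 this
  rw [prob_split _ A.1 z, prob_split _ A.1 z]
  rw [e1 _ (isUp_le _ _) (e2 _ (isUp_le _ _) ?_), e1 _ (isUp_lt _ _) (e2 _ (isUp_lt _ _) ?_)]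
  · simp only [Finset.mem_filter, Finset.mem_univ, true_and, not_lt]
    rintro ⟨ha, hb⟩
    exact key ⟨ha, lt_of_le_of_ne hb (fun e => hzy (A.1.symm.injective e))⟩
  · simp only [Finset.mem_filter, Finset.mem_univ, true_and, not_le]
    rintro ⟨ha, hb⟩
    exact key ⟨lt_of_le_of_ne ha (fun e => hzx (A.1.symm.injective e).symm), hb⟩

lemma adj_diff {D : Set (Pref m)} {φ : Profile D n → Lottery m} (hsp : StrategyProof φ)
    {x y : Fin m} (A B : D) (hadj : Adj A.1 B.1 x y) (i : Fin n) (Q : Profile D n)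
    (U : Finset (Fin m)) (hx : x ∈ U) (hy : y ∉ U) :
    (φ (Function.update Q i A)).prob U - (φ (Function.update Q i B)).prob U
     = (φ (Function.update Q i A)).1 x - (φ (Function.update Q i B)).1 x := by
  unfold Lottery.prob
  rw [← Finset.sum_sub_distrib]
  refine Finset.sum_eq_single_of_mem x hx ?_
  intro z hz hzx
  rw [adj_zero hsp A B hadj i Q z hzx (by rintro rfl; exact hy hz), sub_self]

lemma adj_symm {A B : Pref m} {x y : Fin m} (h : Adj A B x y) : Adj B A y x := by
  obtain ⟨h1, h2, h3⟩ := h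
  exact ⟨h2, h1, fun s r ha hb => (h3 s r hb ha).symm⟩

lemma adj_sum {D : Set (Pref m)} {φ : Profile D n → Lottery m} (hsp : StrategyProof φ)
    {x y : Fin m} (A B : D) (hadj : Adj A.1 B.1 x y) (i : Fin n) (Q : Profile D n) :
    (φ (Function.update Q i A)).1 x - (φ (Function.update Q i B)).1 x
     = (φ (Function.update Q i B)).1 y - (φ (Function.update Q i A)).1 y := by
  have hxy : x ≠ y := by rintro rfl; exact prefers_asymm hadj.1 hadj.1
  have h := adj_diff hsp A B hadj i Q (Finset.univ.erase y) (by simp [hxy]) (by simp)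
  unfold Lottery.prob at h
  rw [Finset.sum_erase_eq_sub (Finset.mem_univ y), Finset.sum_erase_eq_sub (Finset.mem_univ y),
    (φ (Function.update Q i A)).2.2, (φ (Function.update Q i B)).2.2] at h
  linarith

lemma E_inv {D : Set (Pref m)} {φ : Profile D n → Lottery m} (hsp : StrategyProof φ)
    {x y : Fin m} (A B : D) (hadj : Adj A.1 B.1 x y) (i j : Fin n) (d d' : D)
    (he : Relation.EqvGen (E D x y) d d') :
    ∀ Q : Profile D n,
    (φ (Function.update (Function.update Q j d) i A)).1 x
      - (φ (Function.update (Function.update Q j d) i B)).1 x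
    = (φ (Function.update (Function.update Q j d') i A)).1 x
      - (φ (Function.update (Function.update Q j d') i B)).1 x := by
  by_cases hij : j = i
  · subst hij; intro Q; simp
  induction he with
  | refl => intro Q; rfl
  | symm _ _ _ ih => intro Q; exact (ih Q).symm
  | trans _ _ _ _ _ ih1 ih2 => intro Q; exact (ih1 Q).trans (ih2 Q)
  | rel d d' h =>
    intro Q
    obtain ⟨U, hx, hy, hd, hd'⟩ := h
    rw [← adj_diff hsp A B hadj i _ U hx hy, ← adj_diff hsp A B hadj i _ U hx hy]
    have key : ∀ X : D, (φ (Function.update (Function.update Q j d) i X)).prob U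
        = (φ (Function.update (Function.update Q j d') i X)).prob U := by
      intro X
      rw [Function.update_comm hij, Function.update_comm hij]
      have := sp_up_eq hsp (Function.update (Function.update Q i X) j d) j d' (U := U)
        (by simpa using hd) hd'
      simpa using this
    rw [key A, key B]

lemma adj_eq [NeZero m] {p q : Fin m} (hpq : (p : ℕ) + 1 < q)
    {φ : Profile (hybridDomain p q) n → Lottery m} (hu : Unanimous φ) (hsp : StrategyProof φ)
    {x y : Fin m} (A B : hybridDomain p q) (h0 : A.1 0 = B.1 0) (hadj : Adj A.1 B.1 x y)
    (i : Fin n) (Q : Profile (hybridDomain p q) n) :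
    φ (Function.update Q i A) = φ (Function.update Q i B) := by
  classical
  have hxy : x ≠ y := by rintro rfl; exact prefers_asymm hadj.1 hadj.1
  have main := one_by_one
    (fun Q => (φ (Function.update Q i A)).1 x - (φ (Function.update Q i B)).1 x)
    (· = ·) (fun _ => rfl) (fun _ _ _ => Eq.trans)
    (fun d d' : hybridDomain p q => Relation.EqvGen (E (hybridDomain p q) x y) d d' ∨
      Relation.EqvGen (E (hybridDomain p q) y x) d d')
    (by
      intro P j d hd
      rcases hd with hd | hd
      · have := E_inv hsp A B hadj i j _ _ hd P
        simpa using this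
      · have := E_inv hsp B A (adj_symm hadj) i j _ _ hd P
        simp only [Function.update_eq_self] at this
        exact (adj_sum hsp A B hadj i _).trans (this.trans (adj_sum hsp A B hadj i _).symm)) Q (fun j => if Prefers (Q j).1 x y then A else B) (by
      intro j
      by_cases hj : Prefers (Q j).1 x y
      · left
        simp only [hj, if_true]
        exact connect hpq _ _ hj hadj.1
      · right
        simp only [hj, if_false]
        exact connect hpq _ _ ((prefers_total hxy).resolve_left hj) hadj.2.1)
  rw [hu (Function.update (fun j => if Prefers (Q j).1 x y then A else B) i A) (A.1 0),
    hu (Function.update (fun j => if Prefers (Q j).1 x y then A else B) i B) (A.1 0),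
    sub_self] at main
  · apply Subtype.ext
    funext z
    by_cases hzx : z = x
    · subst hzx; linarith
    · by_cases hzy : z = y
      · subst hzy
        have := adj_sum hsp A B hadj i Q
        linarith
      · exact adj_zero hsp A B hadj i Q z hzx hzy
  · intro j
    unfold topOf
    by_cases hj : j = i
    · subst hj; simp [h0]
    · simp only [Function.update_of_ne hj]
      split_ifs
      · rfl
      · exact h0.symm
  · intro j
    unfold topOf
    by_cases hj : j = i
    · subst hj; simp
    · simp only [Function.update_of_ne hj]
      split_ifs
      · rfl
      · exact h0.symm

lemma bubble [NeZero m] {p q : Fin m} (hpq : (p : ℕ) + 1 < q)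
    {φ : Profile (hybridDomain p q) n → Lottery m} (hu : Unanimous φ) (hsp : StrategyProof φ)
    (B : hybridDomain p q) (i : Fin n) (Q : Profile (hybridDomain p q) n) (N : ℕ) :
    ∀ A : hybridDomain p q, A.1 0 = B.1 0 →
    {t : Fin m × Fin m | Prefers A.1 t.1 t.2 ∧ Prefers B.1 t.2 t.1}.ncard ≤ N →
    φ (Function.update Q i A) = φ (Function.update Q i B) := by
  induction N with
  | zero =>
    intro A h0 hN
    by_cases hAB : A.1 = B.1
    · rw [Subtype.ext hAB]
    · exfalso
      obtain ⟨x, y, A', ha, hb⟩ := exists_adj A.1 B.1 hAB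
      have := (Set.ncard_eq_zero (Set.toFinite _)).1 (Nat.le_zero.1 hN)
      exact (Set.eq_empty_iff_forall_notMem.1 this) (x, y) ⟨ha.1, hb⟩
  | succ N ih =>
    intro A h0 hN
    by_cases hAB : A.1 = B.1
    · rw [Subtype.ext hAB]
    · obtain ⟨x, y, A', ha, hb⟩ := exists_adj A.1 B.1 hAB
      have cA := (mem_iff A.1 _).1 ⟨A.2, h0⟩
      have cB := (mem_iff B.1 _).1 ⟨B.2, rfl⟩
      have hA' := (mem_iff A' (B.1 0)).2 (by
        intro s r hC
        rw [← ha.2.2]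
        · exact cA s r hC
        · rintro ⟨rfl, rfl⟩; exact prefers_asymm hb (cB _ _ hC)
        · rintro ⟨rfl, rfl⟩; exact prefers_asymm ha.1 (cA _ _ hC))
      rw [adj_eq hpq hu hsp A ⟨A', hA'.1⟩ (h0.trans hA'.2.symm) ha i Q]
      refine ih ⟨A', hA'.1⟩ hA'.2 ?_
      refine Nat.lt_succ_iff.1 (lt_of_lt_of_le (Set.ncard_lt_ncard ?_ (Set.toFinite _)) hN)
      refine ⟨?_, fun hsub => ?_⟩
      · rintro ⟨s, r⟩ ⟨h1, h2⟩
        refine ⟨?_, h2⟩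
        simp only at h1 h2 ⊢
        rw [ha.2.2]
        · exact h1
        · rintro ⟨rfl, rfl⟩; exact prefers_asymm h1 ha.2.1
        · rintro ⟨rfl, rfl⟩; exact prefers_asymm hb h2
      · have := hsub (show (x, y) ∈ _ from ⟨ha.1, hb⟩)
        exact prefers_asymm this.1 ha.2.1

lemma topsOnly [NeZero m] {p q : Fin m} (hpq : (p : ℕ) + 1 < q)
    {φ : Profile (hybridDomain p q) n → Lottery m} (hu : Unanimous φ) (hsp : StrategyProof φ) :
    TopsOnly φ := by
  intro P P' h
  refine one_by_one φ (· = ·) (fun _ => rfl) (fun _ _ _ => Eq.trans)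
    (fun d d' => topOf d = topOf d') ?_ P P' h
  intro P i d hd
  have := bubble hpq hu hsp d i P _ (P i) hd le_rfl
  simpa using this

end HybPf

namespace HybPf

variable {m n : ℕ}

/-- alternatives with index at least `k` -/
def upN (m k : ℕ) : Finset (Fin m) := Finset.univ.filter (fun a => k ≤ (a : ℕ))

lemma mem_upN {k : ℕ} {a : Fin m} : a ∈ upN m k ↔ k ≤ (a : ℕ) := by simp [upN]

lemma prob_compl (lam : Lottery m) (U : Finset (Fin m)) : lam.prob Uᶜ = 1 - lam.prob U := by
  unfold Lottery.prob
  have h1 := lam.2.2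
  have h2 := Finset.sum_add_sum_compl U lam.1
  linarith

lemma tail_diff (lam : Lottery m) (k : Fin m) :
    lam.1 k = lam.prob (upN m k) - lam.prob (upN m (k + 1)) := by
  have : upN m k = insert k (upN m (k + 1)) := by
    ext a
    simp only [Finset.mem_insert, mem_upN, Fin.ext_iff]
    omega
  rw [this]
  unfold Lottery.prob
  rw [Finset.sum_insert (by simp [mem_upN])]
  ring

lemma prob_deg (a : Fin m) (U : Finset (Fin m)) :
    (degLottery a).prob U = if a ∈ U then 1 else 0 := by
  unfold Lottery.prob degLottery
  simp

lemma exists_hyb [NeZero m] {p q : Fin m} (a : Fin m) (f : Fin m → ℕ)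
    (hf : Function.Injective f) (hC : ∀ s r, C p q a s r → f s < f r) :
    ∃ d : hybridDomain p q, topOf d = a ∧ ∀ s r, Prefers d.1 s r ↔ f s < f r := by
  obtain ⟨P, hP⟩ := exists_pref f hf
  have := (mem_iff P a).2 (fun s r h => (hP s r).2 (hC s r h))
  exact ⟨⟨P, this.1⟩, this.2, hP⟩

lemma exists_up [NeZero m] {p q : Fin m} (hpq : (p : ℕ) + 1 < q) (a : Fin m) (k : ℕ)
    (hk : k ≤ (a : ℕ)) : ∃ d : hybridDomain p q, topOf d = a ∧ IsUp d.1 (upN m k) := by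
  obtain ⟨d, h1, h2⟩ := exists_hyb (p := p) (q := q) a (fun z => if (z : ℕ) < k then 3 * m - z else
      if (z : ℕ) ≤ a then a - z else m + z) (by
    intro s r h
    apply Fin.ext
    simp only at h
    split_ifs at h <;> omega) (by
    intro s r h
    unfold C at h
    simp only [Fin.lt_def, Fin.le_def, Fin.ext_iff, ne_eq] at h ⊢
    split_ifs <;> omega)
  refine ⟨d, h1, ?_⟩
  intro s hs r hr
  rw [mem_upN] at hs hr
  rw [h2]
  split_ifs <;> omega

lemma exists_low [NeZero m] {p q : Fin m} (hpq : (p : ℕ) + 1 < q) (a : Fin m) (k : ℕ)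
    (hk : (a : ℕ) < k) : ∃ d : hybridDomain p q, topOf d = a ∧ IsUp d.1 (upN m k)ᶜ := by
  obtain ⟨d, h1, h2⟩ := exists_hyb (p := p) (q := q) a (fun z => if k ≤ (z : ℕ) then 2 * m + z else
      if (a : ℕ) ≤ z then z - a else 2 * m - z) (by
    intro s r h
    apply Fin.ext
    simp only at h
    split_ifs at h <;> omega) (by
    intro s r h
    unfold C at h
    simp only [Fin.lt_def, Fin.le_def, Fin.ext_iff, ne_eq] at h ⊢
    split_ifs <;> omega)
  refine ⟨d, h1, ?_⟩
  intro s hs r hr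
  rw [Finset.mem_compl, mem_upN] at hs hr
  rw [h2]
  split_ifs <;> omega

lemma exists_pq [NeZero m] {p q : Fin m} (hpq : (p : ℕ) + 1 < q) (a : Fin m)
    (ha : a = p ∨ a = q) :
    ∃ d : hybridDomain p q, topOf d = a ∧ IsUp d.1 {p, q} := by
  obtain ⟨d, h1, h2⟩ := exists_hyb (p := p) (q := q) a (fun z => if (z : ℕ) = a then 0 else
      if (z : ℕ) = p then 1 else if (z : ℕ) = q then 1 else
      if (z : ℕ) < p then 2 + 2 * m - z else 2 + z) (by
    intro s r h
    apply Fin.ext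
    simp only [Fin.ext_iff] at h ha
    split_ifs at h <;> omega) (by
    intro s r h
    unfold C at h
    simp only [Fin.lt_def, Fin.le_def, Fin.ext_iff, ne_eq] at h ha ⊢
    split_ifs <;> omega)
  refine ⟨d, h1, ?_⟩
  intro s hs r hr
  rw [Finset.mem_insert, Finset.mem_singleton] at hs hr
  rw [h2]
  simp only [Fin.ext_iff] at hs hr ha
  split_ifs <;> omega

section
variable [NeZero m] {p q : Fin m} (hpq : (p : ℕ) + 1 < q)
    {φ : Profile (hybridDomain p q) n → Lottery m} (hu : Unanimous φ) (hsp : StrategyProof φ)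
include hpq hu hsp

lemma change_one (P : Profile (hybridDomain p q) n) (i : Fin n) (d d1 d2 : hybridDomain p q)
    (h1 : topOf d1 = topOf (P i)) (h2 : topOf d2 = topOf d)
    (U : Finset (Fin m)) (u1 : IsUp d1.1 U) (u2 : IsUp d2.1 U) :
    (φ P).prob U = (φ (Function.update P i d)).prob U := by
  have hto := topsOnly hpq hu hsp
  have e1 : φ P = φ (Function.update P i d1) := by
    apply hto
    intro j
    by_cases hj : j = i
    · subst hj; simp [h1]
    · simp [Function.update_of_ne hj]
  have e2 : φ (Function.update P i d) = φ (Function.update P i d2) := by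
    apply hto
    intro j
    by_cases hj : j = i
    · subst hj; simp [h2]
    · simp [Function.update_of_ne hj]
  rw [e1, e2]
  have := sp_up_eq hsp (Function.update P i d1) i d2 (U := U) (by simpa using u1) u2
  simpa using this

lemma G_eq (k : ℕ) (P P' : Profile (hybridDomain p q) n)
    (h : ∀ i, k ≤ (topOf (P i) : ℕ) ↔ k ≤ (topOf (P' i) : ℕ)) :
    (φ P).prob (upN m k) = (φ P').prob (upN m k) := by
  refine one_by_one (fun P => (φ P).prob (upN m k)) (· = ·) (fun _ => rfl) (fun _ _ _ => Eq.trans)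
    (fun d d' => k ≤ (topOf d : ℕ) ↔ k ≤ (topOf d' : ℕ)) ?_ P P' h
  intro P i d hd
  by_cases hk : k ≤ (topOf (P i) : ℕ)
  · obtain ⟨d1, t1, u1⟩ := exists_up hpq (topOf (P i)) k hk
    obtain ⟨d2, t2, u2⟩ := exists_up hpq (topOf d) k (hd.1 hk)
    exact change_one hpq hu hsp P i d d1 d2 t1 t2 _ u1 u2
  · obtain ⟨d1, t1, u1⟩ := exists_low hpq (topOf (P i)) k (not_le.1 hk)
    obtain ⟨d2, t2, u2⟩ := exists_low hpq (topOf d) k (not_le.1 (fun h => hk (hd.2 h)))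
    have := change_one hpq hu hsp P i d d1 d2 t1 t2 _ u1 u2
    rw [prob_compl, prob_compl] at this
    show (φ P).prob (upN m k) = _
    linarith

lemma pq_eq (P P' : Profile (hybridDomain p q) n)
    (h : ∀ i, topOf (P i) = topOf (P' i) ∨ ((topOf (P i) = p ∨ topOf (P i) = q) ∧
      (topOf (P' i) = p ∨ topOf (P' i) = q))) :
    (φ P).prob {p, q} = (φ P').prob {p, q} := by
  refine one_by_one (fun P => (φ P).prob {p, q}) (· = ·) (fun _ => rfl) (fun _ _ _ => Eq.trans)
    (fun d d' => topOf d = topOf d' ∨ ((topOf d = p ∨ topOf d = q) ∧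
      (topOf d' = p ∨ topOf d' = q))) ?_ P P' h
  intro P i d hd
  rcases hd with hd | ⟨ha, hb⟩
  · show (φ P).prob _ = (φ _).prob _
    congr 1
    apply topsOnly hpq hu hsp
    intro j
    by_cases hj : j = i
    · subst hj; simp [hd]
    · simp [Function.update_of_ne hj]
  · obtain ⟨d1, t1, u1⟩ := exists_pq hpq (topOf (P i)) ha
    obtain ⟨d2, t2, u2⟩ := exists_pq hpq (topOf d) hb
    exact change_one hpq hu hsp P i d d1 d2 t1 t2 _ u1 u2

lemma G_one (hn : 0 < n) (k : ℕ) (P : Profile (hybridDomain p q) n)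
    (h : ∀ i, k ≤ (topOf (P i) : ℕ)) : (φ P).prob (upN m k) = 1 := by
  have hk : k ≤ m - 1 := by
    have := h ⟨0, hn⟩
    have := (topOf (P ⟨0, hn⟩)).isLt
    omega
  obtain ⟨d, hd, -⟩ := exists_up hpq (lastAlt m) 0 (Nat.zero_le _)
  rw [G_eq hpq hu hsp k P (fun _ => d) (fun i => by
    have := h i
    simp only [hd, lastAlt]
    tauto), hu _ (lastAlt m) (fun _ => hd), prob_deg, if_pos (mem_upN.2 hk)]

lemma G_zero (hn : 0 < n) (k : ℕ) (P : Profile (hybridDomain p q) n)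
    (h : ∀ i, (topOf (P i) : ℕ) < k) : (φ P).prob (upN m k) = 0 := by
  have hk : 0 < k := by
    have := h ⟨0, hn⟩
    omega
  obtain ⟨d, hd, -⟩ := exists_up hpq 0 0 (Nat.zero_le _)
  rw [G_eq hpq hu hsp k P (fun _ => d) (fun i => by
    have := h i
    simp only [hd, Fin.val_zero]
    omega), hu _ 0 (fun _ => hd), prob_deg, if_neg (by rw [mem_upN, Fin.val_zero]; omega)]

lemma pq_prob (hn : 0 < n) (P : Profile (hybridDomain p q) n)
    (h : ∀ i, p ≤ topOf (P i) ∧ topOf (P i) ≤ q) :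
    (φ P).prob {p, q} = 1 - (φ P).prob (upN m (p + 1)) + (φ P).prob (upN m q) := by
  have hne : p ≠ q := by rintro rfl; omega
  have e : (φ P).prob {p, q} = (φ P).1 p + (φ P).1 q := by
    unfold Lottery.prob
    rw [Finset.sum_pair hne]
  rw [e, tail_diff _ p, tail_diff _ q, G_one hpq hu hsp hn p P (fun i => (h i).1),
    G_zero hpq hu hsp hn (q + 1) P (fun i => Nat.lt_succ_of_le (h i).2)]
  ring

end

end HybPf


/-- Every unanimous and strategy-proof RSCF on the full `(p,q)`-hybrid
domain (`q - p > 1`) is a `(p,q)`-PFBR. -/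
theorem unanimous_strategyproof_is_pfbr (m n : ℕ) [NeZero m] (hm : 3 ≤ m) (hn : 2 ≤ n)
    (p q : Fin m) (hgap : (p : ℕ) + 1 < (q : ℕ))
    (φ : Profile (hybridDomain p q) n → Lottery m)
    (hu : Unanimous φ) (hsp : StrategyProof φ) :
    ∃ β, IsPFBRWith φ β ∧ ConstrainedRD p q β := by
  classical
  have hn0 : 0 < n := by omega
  -- the two extreme preferences
  have hmin : Equiv.refl (Fin m) ∈ hybridDomain p q ∧ (Equiv.refl (Fin m)) 0 = 0 := by
    refine (HybPf.mem_iff _ _).2 (fun s r hC => ?_)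
    show s < r
    unfold HybPf.C at hC
    simp only [Fin.lt_def, Fin.le_def, Fin.ext_iff, ne_eq, Fin.val_zero] at hC ⊢
    omega
  have hmax : revPref m ∈ hybridDomain p q ∧ (revPref m) 0 = lastAlt m := by
    refine (HybPf.mem_iff _ _).2 (fun s r hC => ?_)
    show Fin.rev s < Fin.rev r
    rw [Fin.rev_lt_rev]
    unfold HybPf.C at hC
    simp only [Fin.lt_def, Fin.le_def, Fin.ext_iff, ne_eq, lastAlt] at hC ⊢
    omega
  let dmin : hybridDomain p q := ⟨_, hmin.1⟩
  let dmax : hybridDomain p q := ⟨_, hmax.1⟩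
  have tmin : topOf dmin = 0 := hmin.2
  have tmax : topOf dmax = lastAlt m := hmax.2
  let PS : Finset (Fin n) → Profile (hybridDomain p q) n :=
    fun S i => if i ∈ S then dmax else dmin
  let β : Finset (Fin n) → Lottery m := fun S => φ (PS S)
  have hG : ∀ (k : ℕ) (S : Finset (Fin n)) (P : Profile (hybridDomain p q) n), 0 < k → k < m →
      (∀ i, i ∈ S ↔ k ≤ (topOf (P i) : ℕ)) →
      (φ P).prob (HybPf.upN m k) = (β S).prob (HybPf.upN m k) := by
    intro k S P hk0 hkm h
    refine HybPf.G_eq hgap hu hsp k _ _ (fun i => ?_)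
    rw [← h i]
    show _ ↔ k ≤ (topOf (if i ∈ S then dmax else dmin) : ℕ)
    by_cases hi : i ∈ S
    · simp only [hi, if_true, true_iff, tmax, lastAlt]; omega
    · simp only [hi, if_false, false_iff, tmin, Fin.val_zero]; omega
  have hup : ∀ k : Fin m, upSet k = HybPf.upN m k := by
    intro k; ext a
    rw [HybPf.mem_upN, upSet, Finset.mem_filter, Fin.le_def]
    exact ⟨fun h => h.2, fun h => ⟨Finset.mem_univ _, h⟩⟩
  have hdown : ∀ k : Fin m, downSet k = (HybPf.upN m (k + 1))ᶜ := by
    intro k; ext a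
    simp only [downSet, Finset.mem_filter, Finset.mem_univ, true_and, Finset.mem_compl,
      HybPf.mem_upN, Fin.le_def]
    omega
  have hbu : BallotUnanimity β := by
    constructor
    · exact hu _ _ (fun i => by simp [PS, tmax])
    · exact hu _ _ (fun i => by simp [PS, tmin])
  refine ⟨β, ⟨hbu, ?_, ?_⟩, ?_⟩
  · -- monotonicity
    intro S T hST k
    rw [hup]
    refine HybPf.one_by_one (fun P => (φ P).prob (HybPf.upN m k)) (· ≤ ·) (fun _ => le_rfl)
      (fun _ _ _ => le_trans) (fun d d' => d = d' ∨ d' = dmax) ?_ (PS S) (PS T) ?_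
    · intro P i d hd
      rcases hd with rfl | rfl
      · simp
      · have := HybPf.sp_up hsp (Function.update P i dmax) i (P i) (U := HybPf.upN m k) (by
          simp only [Function.update_self]
          intro s hs r hr
          show Fin.rev s < Fin.rev r
          rw [Fin.rev_lt_rev, Fin.lt_def]
          rw [HybPf.mem_upN] at hs hr
          omega)
        simpa using this
    · intro i
      show PS S i = PS T i ∨ PS T i = dmax
      by_cases hT : i ∈ T
      · right; simp [PS, hT]
      · left
        have : i ∉ S := fun h => hT (hST.1 h)
        simp [PS, hT, this]
  · -- the PFBR formula
    have htail : ∀ (P : Profile (hybridDomain p q) n) (k : ℕ),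
        tailProb β P k = (φ P).prob (HybPf.upN m k) := by
      intro P k
      unfold tailProb
      split_ifs with h
      · rw [hup]
        rcases Nat.eq_zero_or_pos k with rfl | hk
        · rw [HybPf.G_one hgap hu hsp hn0 0 P (fun i => Nat.zero_le _)]
          exact HybPf.G_one hgap hu hsp hn0 0 _ (fun i => Nat.zero_le _)
        · exact (hG k _ P hk h (fun i => by simp [voterSet, Fin.le_def])).symm
      · exact (HybPf.G_zero hgap hu hsp hn0 k P
          (fun i => lt_of_lt_of_le (topOf (P i)).isLt (not_lt.1 h))).symm
    intro P k
    rw [htail, htail]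
    exact HybPf.tail_diff _ _
  · -- constrained random dictatorship
    have hqm := q.isLt
    have key : ∀ S T : Finset (Fin n), Disjoint S T →
        (β (S ∪ T)).prob (HybPf.upN m (p + 1)) =
        (β S).prob (HybPf.upN m q) + (β T).prob (HybPf.upN m (p + 1)) := by
      intro S T hST
      obtain ⟨dp, hp, -⟩ := HybPf.exists_up hgap p 0 (Nat.zero_le _)
      obtain ⟨dq, hq, -⟩ := HybPf.exists_up hgap q 0 (Nat.zero_le _)
      obtain ⟨dz, hz, -⟩ := HybPf.exists_up hgap (⟨p + 1, by omega⟩ : Fin m) 0 (Nat.zero_le _)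
      let P1 : Profile (hybridDomain p q) n := fun i => if i ∈ S then dq else if i ∈ T then dz else dp
      let P2 : Profile (hybridDomain p q) n := fun i => if i ∈ T then dz else dp
      have vp : (topOf dp : ℕ) = p := by rw [hp]
      have vq : (topOf dq : ℕ) = q := by rw [hq]
      have vz : (topOf dz : ℕ) = p + 1 := by rw [hz]
      have a1 := HybPf.pq_prob hgap hu hsp hn0 P1 (fun i => by
        simp only [P1, Fin.le_def]
        split_ifs <;> omega)
      have a2 := HybPf.pq_prob hgap hu hsp hn0 P2 (fun i => by
        simp only [P2, Fin.le_def]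
        split_ifs <;> omega)
      have a3 := HybPf.pq_eq hgap hu hsp P1 P2 (fun i => by
        have hd : i ∈ S → i ∉ T := fun h => Finset.disjoint_left.1 hST h
        by_cases hS : i ∈ S
        · right; simp [P1, P2, hS, hd hS, hp, hq]
        · left; simp [P1, P2, hS])
      have b1 := hG (p + 1) (S ∪ T) P1 (by omega) (by omega) (fun i => by
        simp only [P1, Finset.mem_union]
        by_cases hS : i ∈ S <;> by_cases hT : i ∈ T <;> simp [hS, hT, vp, vq, vz] <;> omega)
      have b2 := hG q S P1 (by omega) (by omega) (fun i => by
        simp only [P1]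
        by_cases hS : i ∈ S <;> by_cases hT : i ∈ T <;> simp [hS, hT, vp, vq, vz] <;> omega)
      have b3 := hG (p + 1) T P2 (by omega) (by omega) (fun i => by
        simp only [P2]
        by_cases hT : i ∈ T <;> simp [hT, vp, vz])
      have b4 := HybPf.G_zero hgap hu hsp hn0 q P2 (fun i => by
        simp only [P2]
        split_ifs <;> omega)
      linarith
    have hempty : ∀ k : ℕ, 0 < k → (β ∅).prob (HybPf.upN m k) = 0 := by
      intro k hk
      rw [hbu.2, HybPf.prob_deg, if_neg]
      rw [HybPf.mem_upN, Fin.val_zero]; omega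
    have hpe : ∀ S : Finset (Fin n),
        (β S).prob (HybPf.upN m (p + 1)) = (β S).prob (HybPf.upN m q) := by
      intro S
      have := key S ∅ (Finset.disjoint_empty_right S)
      rw [Finset.union_empty, hempty _ (Nat.succ_pos _), add_zero] at this
      exact this
    have hsum : ∀ S : Finset (Fin n),
        (β S).prob (HybPf.upN m q) = ∑ i ∈ S, (β {i}).prob (HybPf.upN m q) := by
      intro S
      induction S using Finset.induction_on with
      | empty => rw [hempty _ (by omega), Finset.sum_empty]
      | insert a S ha ih =>
        rw [Finset.sum_insert ha, ← ih, Finset.insert_eq, ← hpe,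
          key {a} S (Finset.disjoint_singleton_left.2 ha), hpe S]
    have huniv : (β Finset.univ).prob (HybPf.upN m q) = 1 := by
      rw [hbu.1, HybPf.prob_deg, if_pos]
      rw [HybPf.mem_upN]; simp only [lastAlt]; omega
    refine ⟨fun i => (β {i}).prob (HybPf.upN m q), fun i => ?_, ?_, fun S => ⟨?_, ?_⟩⟩
    · exact Finset.sum_nonneg (fun a _ => (β {i}).2.1 a)
    · rw [← hsum, huniv]
    · rw [hup]; exact hsum S
    · rw [hdown, HybPf.prob_compl, hpe, ← hsum, hsum S, hsum Sᶜ, ← huniv, hsum Finset.univ,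
        ← Finset.sum_add_sum_compl S]
      ring
end
end

section
/- Let 1 ≤ p < q ≤ m with 1 < q − p < m − 1. An anonymous (p, q)-PFBR φ : [D_≺(p, q)]^n → Δ(A) is decomposable if and only if its probabilistic ballots satisfy per-capita monotonicity w.r.t. a_p and a_q. -/
open Finset

noncomputable section

open PFBRPaper

namespace PFBRAux

variable {m n : ℕ}

/-- tail probability, indexed by naturals -/
def tl (lam : Lottery m) (k : ℕ) : ℝ := ∑ a : Fin m, if k ≤ (a : ℕ) then lam.1 a else 0

/-- voter set indexed by naturals -/
def vs [NeZero m] {D : Set (Pref m)} (P : Profile D n) (k : ℕ) : Finset (Fin n) :=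
  Finset.univ.filter (fun i => k ≤ (topOf (P i) : ℕ))

lemma prob_upSet (lam : Lottery m) (k : Fin m) : lam.prob (upSet k) = tl lam k := by
  unfold Lottery.prob upSet tl
  rw [Finset.sum_filter]
  rfl

lemma tl_zero (lam : Lottery m) : tl lam 0 = 1 := by
  simp [tl, lam.2.2]

lemma tl_ge (lam : Lottery m) {k : ℕ} (h : m ≤ k) : tl lam k = 0 := by
  unfold tl
  apply Finset.sum_eq_zero
  intro a _
  rw [if_neg]
  have := a.2
  omega

lemma tl_anti (lam : Lottery m) {k l : ℕ} (h : k ≤ l) : tl lam l ≤ tl lam k := by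
  unfold tl
  apply Finset.sum_le_sum
  intro a _
  have := lam.2.1 a
  split_ifs <;> first | linarith | omega

lemma tl_nonneg (lam : Lottery m) (k : ℕ) : 0 ≤ tl lam k := by
  unfold tl
  apply Finset.sum_nonneg
  intro a _
  have := lam.2.1 a
  split_ifs <;> first | linarith | omega

lemma tl_diff (lam : Lottery m) (a : Fin m) : tl lam a - tl lam (a + 1) = lam.1 a := by
  unfold tl
  rw [← Finset.sum_sub_distrib]
  rw [Finset.sum_eq_single a]
  · simp
  · intro b _ hb
    have : (b : ℕ) ≠ a := fun h => hb (Fin.ext h)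
    split_ifs <;> first | omega | simp
  · simp

lemma prob_downSet (lam : Lottery m) (k : Fin m) : lam.prob (downSet k) = 1 - tl lam (k + 1) := by
  rw [← lam.2.2]
  unfold Lottery.prob downSet tl
  rw [Finset.sum_filter, ← Finset.sum_sub_distrib]
  apply Finset.sum_congr rfl
  intro a _
  have : a ≤ k ↔ ¬ ((k : ℕ) + 1 ≤ a) := by rw [Fin.le_def]; omega
  simp only [this]
  split_ifs <;> simp

lemma tail_ext (m : ℕ) (g h : ℕ → ℝ) (hg : ∀ k, m ≤ k → g k = 0) (hh : ∀ k, m ≤ k → h k = 0)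
    (hd : ∀ k, k < m → g k - g (k + 1) = h k - h (k + 1)) (k : ℕ) : g k = h k := by
  obtain ⟨j, hj⟩ : ∃ j, j = m - k := ⟨_, rfl⟩
  induction j generalizing k with
  | zero => rw [hg k (by omega), hh k (by omega)]
  | succ j ih =>
    have := ih (k + 1) (by omega)
    have := hd k (by omega)
    linarith

lemma lot_ext (a b : Lottery m) (h : ∀ k, k < m → tl a k = tl b k) : a = b := by
  apply Subtype.ext
  funext c
  rw [← tl_diff, ← tl_diff, h _ c.2]
  by_cases hc : (c : ℕ) + 1 < m
  · rw [h _ hc]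
  · rw [tl_ge a (k := c + 1) (by omega), tl_ge b (k := c + 1) (by omega)]

lemma tl_deg (a : Fin m) (k : ℕ) : tl (degLottery a) k = if k ≤ (a : ℕ) then 1 else 0 := by
  unfold tl degLottery
  rw [Finset.sum_eq_single a]
  · simp
  · intro b _ hb
    simp [hb]
  · simp

section
variable [NeZero m] {D : Set (Pref m)}

lemma tailProb_eq (β : Finset (Fin n) → Lottery m) (P : Profile D n) (k : ℕ) :
    tailProb β P k = tl (β (vs P k)) k := by
  unfold tailProb
  split_ifs with h
  · rw [prob_upSet]
    rfl
  · rw [tl_ge _ (by omega)]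

lemma tl_phi {φ : Profile D n → Lottery m} {β : Finset (Fin n) → Lottery m}
    (hβ : IsPFBRWith φ β) (P : Profile D n) (k : ℕ) : tl (φ P) k = tl (β (vs P k)) k := by
  apply tail_ext m (fun k => tl (φ P) k) (fun k => tl (β (vs P k)) k)
  · intro k hk; exact tl_ge _ hk
  · intro k hk; exact tl_ge _ hk
  · intro k hk
    have h1 := tl_diff (φ P) ⟨k, hk⟩
    have h2 := hβ.2.2 P ⟨k, hk⟩
    rw [tailProb_eq, tailProb_eq] at h2
    simp only at h1 h2 ⊢
    rw [h1, h2]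

lemma mid_tl {p q : Fin m} {β : Finset (Fin n) → Lottery m} {ε : Fin n → ℝ}
    (hε : ∑ i, ε i = 1)
    (h : ∀ S : Finset (Fin n),
      (β S).prob (upSet q) = ∑ i ∈ S, ε i ∧
      (β S).prob (downSet p) = ∑ i ∈ Sᶜ, ε i) (S : Finset (Fin n)) {k : ℕ}
    (h1 : (p : ℕ) < k) (h2 : k ≤ q) : tl (β S) k = ∑ i ∈ S, ε i := by
  obtain ⟨ha, hb⟩ := h S
  rw [prob_upSet] at ha
  rw [prob_downSet] at hb
  have := Finset.sum_add_sum_compl S ε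
  have := tl_anti (β S) h2
  have := tl_anti (β S) (show (p : ℕ) + 1 ≤ k from h1)
  linarith

lemma topSum_deg (a : Fin m) (P : Pref m) (k : ℕ) :
    topSum (degLottery a) P k = if (P.symm a : ℕ) < k then 1 else 0 := by
  unfold topSum degLottery
  rw [Finset.sum_filter, Finset.sum_eq_single (P.symm a)]
  · simp
  · intro b _ hb
    have : P b ≠ a := fun h => hb (by simp [← h])
    simp [this]
  · simp

lemma sp_iff (f : Profile D n → Fin m) :
    StrategyProof (fun P => degLottery (f P)) ↔
    ∀ (i : Fin n) (P : Profile D n) (Q : D),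
      (P i).1.symm (f P) ≤ (P i).1.symm (f (Function.update P i Q)) := by
  unfold StrategyProof
  constructor
  · intro h i P Q
    have := h i P Q ((P i).1.symm (f (Function.update P i Q)) + 1) (Fin.is_lt _)
    simp only [topSum_deg] at this
    rw [if_pos (by omega)] at this
    by_contra hc
    rw [if_neg] at this
    · linarith
    · rw [Fin.le_def] at hc; omega
  · intro h i P Q k _
    have := h i P Q
    rw [Fin.le_def] at this
    simp only [topSum_deg]
    split_ifs <;> first | omega | norm_num


/-- preference from a key -/
lemma exists_pref (κ : Fin m → ℕ) (hκ : Function.Injective κ) :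
    ∃ P : Pref m, ∀ a b, P.symm a < P.symm b ↔ κ a < κ b := by
  have hs : StrictMono (κ ∘ Tuple.sort κ) :=
    (Tuple.monotone_sort κ).strictMono_of_injective (hκ.comp (Tuple.sort κ).injective)
  refine ⟨Tuple.sort κ, fun a b => ?_⟩
  rw [← hs.lt_iff_lt]
  simp

lemma pref_top {κ : Fin m → ℕ} {P : Pref m} (hP : ∀ a b, P.symm a < P.symm b ↔ κ a < κ b)
    (c : Fin m) (hc : ∀ a, κ c ≤ κ a) : P 0 = c := by
  by_contra hne
  have h1 : P.symm c ≠ 0 := by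
    intro h
    apply hne
    rw [← h]; simp
  have h2 : P.symm (P 0) < P.symm c := by
    rw [Equiv.symm_apply_apply]
    exact Fin.pos_iff_ne_zero.mpr h1
  rw [hP] at h2
  have := hc (P 0)
  omega

/-- A hybrid preference from a key. -/
lemma exists_hyb (p q : Fin m) (κ : Fin m → ℕ) (hκ : Function.Injective κ) (c : Fin m)
    (hc : ∀ a, κ c ≤ κ a)
    (h1 : ∀ r s : Fin m, ((r ≤ p ∧ s ≤ p) ∨ (q ≤ r ∧ q ≤ s)) →
      ((r < s ∧ s < c) ∨ (c < s ∧ s < r)) → κ s < κ r)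
    (h2 : c ≤ p → ∀ l : Fin m, p ≤ l → l ≤ q → l ≠ p → κ p < κ l)
    (h3 : q ≤ c → ∀ l : Fin m, p ≤ l → l ≤ q → l ≠ q → κ q < κ l) :
    ∃ P : hybridDomain p q, topOf P = c ∧ ∀ a b, P.1.symm a ≤ P.1.symm b ↔ κ a ≤ κ b := by
  obtain ⟨P, hP⟩ := exists_pref κ hκ
  have ht := pref_top hP c hc
  refine ⟨⟨P, ?_, ?_, ?_⟩, ht, ?_⟩
  · intro r s; rw [ht]; intro a b; exact (hP _ _).2 (h1 r s a b)
  · rw [ht]; intro a l b c d; exact (hP _ _).2 (h2 a l b c d)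
  · rw [ht]; intro a l b c d; exact (hP _ _).2 (h3 a l b c d)
  · intro a b
    have := not_congr (hP b a)
    rwa [not_lt, not_lt] at this

end
end PFBRAux

namespace PFBRAux

variable {m n : ℕ}

section
variable [NeZero m]

lemma zero_val : ((0 : Fin m) : ℕ) = 0 := by simp

/-- profile with `S` at `R0` and others at `T`. -/
def prof {D : Set (Pref m)} (T R0 : D) (S : Finset (Fin n)) : Profile D n :=
  fun i => if i ∈ S then R0 else T

lemma prof_update {D : Set (Pref m)} (T R0 : D) (S : Finset (Fin n)) (i : Fin n) :
    prof T R0 (insert i S) = Function.update (prof T R0 S) i R0 := by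
  funext j
  by_cases h : j = i
  · subst h; simp [prof]
  · simp [prof, h]

lemma exists_prefs (p q : Fin m) (hgap1 : (p : ℕ) + 1 < (q : ℕ)) :
    ∃ (T I R0 Q : hybridDomain p q),
      topOf T = 0 ∧ topOf I = 0 ∧ topOf R0 = lastAlt m ∧ ((topOf Q : Fin m) : ℕ) = p + 1 ∧
      (∀ a b : Fin m, (a ≤ p ∨ q ≤ a) → (b ≤ p ∨ q ≤ b) → T.1.symm a ≤ T.1.symm b → a ≤ b) ∧
      (∀ a b : Fin m, (p < a ∧ a < q) → T.1.symm a ≤ T.1.symm b → p < b ∧ b < q) ∧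
      (∀ a b : Fin m, I.1.symm a ≤ I.1.symm b → a ≤ b) ∧
      (∀ a b : Fin m, Q.1.symm a ≤ Q.1.symm b → q ≤ b → ¬ a ≤ p) := by
  have hq := q.2
  obtain ⟨T, hT, hT'⟩ := exists_hyb p q
    (fun a => if (a : ℕ) ≤ p ∨ (q : ℕ) ≤ a then (a : ℕ) else m + a)
    (by intro a b h; apply Fin.ext; have := a.2; have := b.2; dsimp only at h
        split_ifs at h <;> omega)
    0 (by intro a; simp)
    (by intro r s h1 h2; simp only [Fin.lt_def, Fin.le_def, Fin.val_zero] at *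
        split_ifs <;> omega)
    (by intro _ l h1 h2 h3; have h3 : (l : ℕ) ≠ p := fun h => h3 (Fin.ext h)
        simp only [Fin.lt_def, Fin.le_def, Fin.val_zero] at *
        split_ifs <;> omega)
    (by intro h; simp only [Fin.lt_def, Fin.le_def, Fin.val_zero] at *; omega)
  obtain ⟨I, hI, hI'⟩ := exists_hyb p q
    (fun a => (a : ℕ))
    (by intro a b h; apply Fin.ext; exact h)
    0 (by intro a; simp)
    (by intro r s h1 h2; simp only [Fin.lt_def, Fin.le_def, Fin.val_zero] at *
        omega)
    (by intro _ l h1 h2 h3; have h3 : (l : ℕ) ≠ p := fun h => h3 (Fin.ext h)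
        simp only [Fin.lt_def, Fin.le_def, Fin.val_zero] at *
        omega)
    (by intro h; simp only [Fin.lt_def, Fin.le_def, Fin.val_zero] at *; omega)
  have hl : ((lastAlt m : Fin m) : ℕ) = m - 1 := rfl
  obtain ⟨R0, hR, hR'⟩ := exists_hyb p q
    (fun a => m - (a : ℕ))
    (by intro a b h; apply Fin.ext; have := a.2; have := b.2; dsimp only at h; omega)
    (lastAlt m) (by intro a; have := a.2; rw [hl]; omega)
    (by intro r s h1 h2; have := r.2; have := s.2; simp only [Fin.lt_def, Fin.le_def, hl] at *
        omega)
    (by intro h; simp only [Fin.lt_def, Fin.le_def, hl] at *; omega)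
    (by intro _ l h1 h2 h3; have h3 : (l : ℕ) ≠ q := fun h => h3 (Fin.ext h)
        simp only [Fin.lt_def, Fin.le_def, hl] at *
        omega)
  obtain ⟨Q, hQ, hQ'⟩ := exists_hyb p q
    (fun a => if (a : ℕ) = p + 1 then 0 else if (q : ℕ) ≤ a then 1 + (a : ℕ) else
      if (a : ℕ) ≤ p then 3 * m - a else 4 * m + a)
    (by intro a b h; apply Fin.ext; have := a.2; have := b.2; dsimp only at h
        split_ifs at h <;> omega)
    ⟨p + 1, by omega⟩ (by intro a; simp)
    (by intro r s h1 h2; have := r.2; have := s.2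
        simp only [Fin.lt_def, Fin.le_def] at *
        split_ifs <;> omega)
    (by intro h; simp only [Fin.le_def] at h; omega)
    (by intro h; simp only [Fin.le_def] at h; omega)
  refine ⟨T, I, R0, Q, hT, hI, hR, by rw [hQ], ?_, ?_, ?_, ?_⟩
  · intro a b h1 h2 h
    rw [hT'] at h
    simp only [Fin.le_def] at *
    rw [if_pos h1, if_pos h2] at h
    exact h
  · intro a b h1 h
    rw [hT'] at h
    have := a.2
    have := b.2
    simp only [Fin.le_def, Fin.lt_def] at *
    split_ifs at h <;> omega
  · intro a b h
    rw [hI'] at h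
    exact h
  · intro a b h h1 h2
    rw [hQ'] at h
    have := a.2
    have := b.2
    simp only [Fin.le_def, Fin.lt_def] at *
    split_ifs at h <;> omega

lemma prof_mono {p q : Fin m} {T R0 : hybridDomain p q}
    (hT1 : ∀ a b : Fin m, (a ≤ p ∨ q ≤ a) → (b ≤ p ∨ q ≤ b) → T.1.symm a ≤ T.1.symm b → a ≤ b)
    (f : Profile (hybridDomain p q) n → Fin m)
    (hsp : ∀ (i : Fin n) (P : Profile (hybridDomain p q) n) (Q : hybridDomain p q),
      (P i).1.symm (f P) ≤ (P i).1.symm (f (Function.update P i Q)))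
    (hLR : ∀ S, f (prof T R0 S) ≤ p ∨ q ≤ f (prof T R0 S)) {S S' : Finset (Fin n)}
    (h : S ⊆ S') : f (prof T R0 S) ≤ f (prof T R0 S') := by
  have step : ∀ (S : Finset (Fin n)) i, f (prof T R0 S) ≤ f (prof T R0 (insert i S)) := by
    intro S i
    by_cases hi : i ∈ S
    · rw [Finset.insert_eq_of_mem hi]
    · apply hT1 _ _ (hLR _) (hLR _)
      have := hsp i (prof T R0 S) R0
      rw [← prof_update] at this
      have h2 : prof T R0 S i = T := by simp [prof, hi]
      rwa [h2] at this
  have : ∀ U : Finset (Fin n), f (prof T R0 S) ≤ f (prof T R0 (U ∪ S)) := by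
    intro U
    induction U using Finset.induction_on with
    | empty => simp
    | insert a U _ ih =>
      rw [Finset.insert_union]
      exact ih.trans (step _ _)
  have h3 := this S'
  rwa [Finset.union_eq_left.mpr h] at h3

/-- No two singletons are both winning. -/
lemma unique_winner {p q : Fin m} (hgap1 : (p : ℕ) + 1 < (q : ℕ))
    {T I R0 Q : hybridDomain p q}
    (hT : topOf T = 0) (hI : topOf I = 0) (hR : topOf R0 = lastAlt m)
    (hQ : ((topOf Q : Fin m) : ℕ) = p + 1)
    (hT1 : ∀ a b : Fin m, (a ≤ p ∨ q ≤ a) → (b ≤ p ∨ q ≤ b) → T.1.symm a ≤ T.1.symm b → a ≤ b)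
    (hT2 : ∀ a b : Fin m, (p < a ∧ a < q) → T.1.symm a ≤ T.1.symm b → p < b ∧ b < q)
    (hI1 : ∀ a b : Fin m, I.1.symm a ≤ I.1.symm b → a ≤ b)
    (hQ1 : ∀ a b : Fin m, Q.1.symm a ≤ Q.1.symm b → q ≤ b → ¬ a ≤ p)
    (f : Profile (hybridDomain p q) n → Fin m)
    (hsp : ∀ (i : Fin n) (P : Profile (hybridDomain p q) n) (Q : hybridDomain p q),
      (P i).1.symm (f P) ≤ (P i).1.symm (f (Function.update P i Q)))
    (hmid : ∀ P, p < f P → f P < q → ∃ i, topOf (P i) = f P)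
    (hup : ∀ P, q ≤ f P → ∃ i, q ≤ topOf (P i))
    (i j : Fin n) (hi : q ≤ f (prof T R0 {i})) (hj : q ≤ f (prof T R0 {j})) : i = j := by
  by_contra hij
  have hlast : ((lastAlt m : Fin m) : ℕ) = m - 1 := rfl
  have hq := q.2
  -- profile A
  set A : Profile (hybridDomain p q) n := Function.update (fun _ => T) j Q with hA
  have hAj : A j = Q := by simp [hA]
  have hAi : A i = T := by simp [hA, hij]
  have hAR : Function.update A j R0 = prof T R0 {j} := by
    funext k
    by_cases hk : k = j
    · subst hk; simp [prof]
    · simp [prof, hk, hA]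
  have hfA : p < f A ∧ f A < q := by
    constructor
    · have := hsp j A R0
      rw [hAR, hAj] at this
      exact not_le.mp (hQ1 _ _ this hj)
    · by_contra hc
      obtain ⟨k, hk⟩ := hup A (not_lt.mp hc)
      by_cases hkj : k = j
      · subst hkj
        rw [hAj, Fin.le_def, hQ] at hk
        omega
      · have : A k = T := by simp [hA, hkj]
        rw [this, hT, Fin.le_def, zero_val] at hk
        omega
  set B : Profile (hybridDomain p q) n := Function.update A i R0 with hB
  have hfB : p < f B ∧ f B < q := by
    have := hsp i A R0
    rw [hAi] at this
    exact hT2 _ _ hfA this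
  set C : Profile (hybridDomain p q) n := Function.update (prof T R0 {i}) j I with hC
  have hCj : C j = I := by simp [hC]
  have hCB : Function.update C j Q = B := by
    funext k
    by_cases hk : k = j
    · subst hk; simp [hB, Ne.symm hij, hA]
    · by_cases hk' : k = i
      · subst hk'; simp [hC, hB, prof, hk]
      · simp [hC, hB, hA, prof, hk, hk']
  have hCLR : f C ≤ p ∨ q ≤ f C := by
    by_contra hc
    push Not at hc
    obtain ⟨k, hk⟩ := hmid C hc.1 hc.2
    by_cases hkj : k = j
    · subst hkj
      rw [hCj, hI] at hk
      rw [← hk, Fin.lt_def] at hc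
      simp at hc
    · by_cases hk' : k = i
      · subst hk'
        have : C k = R0 := by simp [hC, prof, hkj]
        rw [this, hR] at hk
        rw [← hk, Fin.lt_def, Fin.lt_def, hlast] at hc
        omega
      · have : C k = T := by simp [hC, prof, hkj, hk']
        rw [this, hT] at hk
        rw [← hk, Fin.lt_def] at hc
        simp at hc
  have h1 := hsp j (prof T R0 {i}) I
  have h2 : (prof T R0 {i}) j = T := by simp [prof, Ne.symm hij]
  rw [h2, ← hC] at h1
  have h3 := hT1 _ _ (Or.inr hi) hCLR h1
  have h4 := hsp j C Q
  rw [hCj, hCB] at h4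
  have h5 := hI1 _ _ h4
  exact absurd hfB.2 (not_lt.mpr (hi.trans (h3.trans h5)))

end

/-- The counting lemma. -/
lemma per_capita_aux {r : ℕ} (α : Fin r → ℝ) (hα : ∀ k, 0 < α k)
    (G : Fin r → Finset (Fin n) → Prop) (d : Fin r → Fin n)
    (F : Finset (Fin n) → ℝ)
    (hF : ∀ S, F S = ∑ k, α k * (open Classical in if G k S then 1 else 0))
    (hmono : ∀ k S S', S ⊆ S' → G k S → G k S')
    (hd : ∀ k S, G k S → d k ∈ S)
    (hcard : ∀ S S' : Finset (Fin n), S.card = S'.card → F S = F S')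
    (S S' : Finset (Fin n)) (hS : S.Nonempty) (hSS : S ⊆ S') :
    F S / (S.card : ℝ) ≤ F S' / (S'.card : ℝ) := by
  classical
  have step : ∀ (S : Finset (Fin n)) i, i ∉ S → S.Nonempty →
      F S / (S.card : ℝ) ≤ F (insert i S) / ((insert i S).card : ℝ) := by
    intro S i hi hS
    have hc : (insert i S).card = S.card + 1 := Finset.card_insert_of_notMem hi
    have h0 : (0 : ℝ) < S.card := by exact_mod_cast hS.card_pos
    have h1 : ∑ j ∈ insert i S, F ((insert i S).erase j) = (S.card + 1 : ℝ) * F S := by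
      rw [Finset.sum_congr rfl (g := fun _ => F S)]
      · rw [Finset.sum_const, hc]; simp
      · intro j hj
        apply hcard
        rw [Finset.card_erase_of_mem hj, hc]; simp
    have h2 : ∑ j ∈ insert i S, F ((insert i S).erase j) ≤ (S.card : ℝ) * F (insert i S) := by
      simp only [hF]
      rw [Finset.sum_comm, Finset.mul_sum]
      apply Finset.sum_le_sum
      intro k _
      rw [← Finset.mul_sum, mul_left_comm]
      apply mul_le_mul_of_nonneg_left _ (hα k).le
      by_cases hG : G k (insert i S)
      · rw [if_pos hG, mul_one]
        have hdk := hd k _ hG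
        rw [← Finset.add_sum_erase _ _ hdk, if_neg, zero_add]
        · calc _ ≤ ∑ j ∈ (insert i S).erase (d k), (1 : ℝ) := by
                apply Finset.sum_le_sum; intro j _; split_ifs <;> norm_num
            _ = S.card := by
                rw [Finset.sum_const, Finset.card_erase_of_mem hdk, hc]; simp
        · intro h
          have := hd k _ h
          simp at this
      · rw [if_neg hG, mul_zero]
        apply le_of_eq
        apply Finset.sum_eq_zero
        intro j _
        rw [if_neg]
        intro h
        exact hG (hmono k _ _ (Finset.erase_subset _ _) h)
    rw [h1] at h2
    rw [hc, div_le_div_iff₀ h0 (by push_cast; linarith)]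
    push_cast
    linarith
  have : ∀ U : Finset (Fin n), F S / (S.card : ℝ) ≤ F (U ∪ S) / ((U ∪ S).card : ℝ) := by
    intro U
    induction U using Finset.induction_on with
    | empty => simp
    | insert a U _ ih =>
      rw [Finset.insert_union]
      by_cases ha : a ∈ U ∪ S
      · rw [Finset.insert_eq_of_mem ha]; exact ih
      · exact ih.trans (step _ _ ha (hS.mono Finset.subset_union_right))
  have h3 := this S'
  rwa [Finset.union_eq_left.mpr hSS] at h3

section
variable [NeZero m]

lemma phi_prof {D : Set (Pref m)} {φ : Profile D n → Lottery m} {β : Finset (Fin n) → Lottery m}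
    (hβ : IsPFBRWith φ β) {T R0 : D} (hT : topOf T = 0) (hR : topOf R0 = lastAlt m)
    (S : Finset (Fin n)) : φ (prof T R0 S) = β S := by
  apply lot_ext
  intro k hk
  rw [tl_phi hβ]
  rcases Nat.eq_zero_or_pos k with rfl | hk0
  · rw [tl_zero, tl_zero]
  · suffices h : vs (prof T R0 S) k = S by rw [h]
    apply Finset.ext
    intro i
    have hlast : ((lastAlt m : Fin m) : ℕ) = m - 1 := rfl
    by_cases hi : i ∈ S
    · have h2 : prof T R0 S i = R0 := by simp [prof, hi]
      rw [vs, Finset.mem_filter, h2, hR, hlast]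
      exact ⟨fun _ => hi, fun _ => ⟨Finset.mem_univ _, by omega⟩⟩
    · have h2 : prof T R0 S i = T := by simp [prof, hi]
      rw [vs, Finset.mem_filter, h2, hT, zero_val]
      exact ⟨fun h => by have := h.2; omega, fun h => absurd h hi⟩

lemma card_eq {D : Set (Pref m)} {φ : Profile D n → Lottery m} {β : Finset (Fin n) → Lottery m}
    (hβ : IsPFBRWith φ β) (hanon : Anonymous φ)
    {T R0 : D} (hT : topOf T = 0) (hR : topOf R0 = lastAlt m)
    (S S' : Finset (Fin n)) (h : S.card = S'.card) : β S = β S' := by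
  rw [← phi_prof hβ hT hR S, ← phi_prof hβ hT hR S']
  let e : {x // x ∈ S} ≃ {x // x ∈ S'} := Finset.equivOfCardEq h
  rw [← hanon (prof T R0 S') e.extendSubtype]
  congr 1
  funext i
  by_cases hi : i ∈ S
  · have := e.extendSubtype_mem i hi
    simp [prof, hi, this]
  · have := e.extendSubtype_not_mem i hi
    simp [prof, hi, this]

theorem forward {p q : Fin m} (hgap1 : (p : ℕ) + 1 < (q : ℕ))
    (φ : Profile (hybridDomain p q) n → Lottery m)
    (β : Finset (Fin n) → Lottery m)
    (hβ : IsPFBRWith φ β) (hcrd : ConstrainedRD p q β)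
    (hanon : Anonymous φ) (hdec : Decomposable φ) : PerCapitaMonotone p q β := by
  classical
  obtain ⟨T, I, R0, Q, hT, hI, hR, hQ, hT1, hT2, hI1, hQ1⟩ := exists_prefs p q hgap1
  obtain ⟨r, f, α, hα, hα1, hf, hφ⟩ := hdec
  obtain ⟨ε, hε0, hε1, hε⟩ := hcrd
  have hlast : ((lastAlt m : Fin m) : ℕ) = m - 1 := rfl
  have hqm := q.2
  have hsp := fun k => (sp_iff (f k)).1 (hf k).2
  -- tails
  have htl : ∀ P (t : ℕ), tl (φ P) t = ∑ k, α k * (if t ≤ (f k P : ℕ) then 1 else 0) := by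
    intro P t
    unfold tl
    simp only [hφ]
    have : ∀ a : Fin m, (if t ≤ (a : ℕ) then ∑ k, α k * (if f k P = a then (1 : ℝ) else 0) else 0)
        = ∑ k, α k * (if f k P = a then (if t ≤ (a : ℕ) then 1 else 0) else 0) := by
      intro a
      split_ifs <;> simp
    simp only [this]
    rw [Finset.sum_comm]
    apply Finset.sum_congr rfl
    intro k _
    rw [← Finset.mul_sum]
    simp
  have hmidtl : ∀ P (t : ℕ), (p : ℕ) < t → t ≤ q →
      ∑ k, α k * (if t ≤ (f k P : ℕ) then 1 else 0) = ∑ i ∈ vs P t, ε i := by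
    intro P t h1 h2
    rw [← htl, tl_phi hβ, mid_tl hε1 hε _ h1 h2]
  have hup : ∀ k P, q ≤ f k P → ∃ i, q ≤ topOf (P i) := by
    intro k P h
    by_contra hc
    push Not at hc
    have h1 := hmidtl P q (by omega) le_rfl
    have h2 : vs P q = ∅ := by
      apply Finset.filter_eq_empty_iff.mpr
      intro i _
      have := hc i
      rw [Fin.lt_def] at this
      omega
    rw [h2, Finset.sum_empty, Finset.sum_eq_zero_iff_of_nonneg] at h1
    · have h3 := h1 k (Finset.mem_univ _)
      rw [if_pos (Fin.le_def.mp h)] at h3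
      have := hα k
      linarith
    · intro k _
      have := hα k
      split_ifs <;> linarith
  have hmid : ∀ k P, p < f k P → f k P < q → ∃ i, topOf (P i) = f k P := by
    intro k P h h'
    by_contra hc
    push Not at hc
    have h1 := hmidtl P (f k P) h h'.le
    have h1' := hmidtl P (f k P + 1) (by rw [Fin.lt_def] at h; omega) h'
    have h2 : vs P (f k P) = vs P (f k P + 1) := by
      ext i
      have := hc i
      have : (topOf (P i) : ℕ) ≠ f k P := fun h => this (Fin.ext h)
      simp [vs]
      omega
    rw [h2, ← h1', ← sub_eq_zero, ← Finset.sum_sub_distrib,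
      Finset.sum_eq_zero_iff_of_nonneg] at h1
    · have h3 := h1 k (Finset.mem_univ _)
      rw [if_pos le_rfl, if_neg (by omega)] at h3
      have := hα k
      linarith
    · intro l _
      have := hα l
      split_ifs <;> first | omega | linarith
  have hLR : ∀ k S, f k (prof T R0 S) ≤ p ∨ q ≤ f k (prof T R0 S) := by
    intro k S
    by_contra hc
    push Not at hc
    obtain ⟨i, hi⟩ := hmid k _ hc.1 hc.2
    rw [← hi, Fin.lt_def, Fin.lt_def] at hc
    by_cases h : i ∈ S
    · simp only [prof, h, if_true, hR, hlast] at hc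
      omega
    · simp [prof, h, hT] at hc
  have hmono := fun k => fun {S S'} => prof_mono hT1 (f k) (hsp k) (hLR k) (S := S) (S' := S')
  have huniq := fun k => unique_winner hgap1 hT hI hR hQ hT1 hT2 hI1 hQ1 (f k) (hsp k)
    (hmid k) (hup k)
  have hW : ∀ S, ∑ k, α k * (if q ≤ f k (prof T R0 S) then (1 : ℝ) else 0) = ∑ i ∈ S, ε i := by
    intro S
    have h1 := htl (prof T R0 S) q
    rw [phi_prof hβ hT hR, mid_tl hε1 hε _ (by omega) le_rfl] at h1
    rw [h1]
    rfl
  -- existence of a winner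
  have hex : ∀ k, ∃ i, q ≤ f k (prof T R0 {i}) := by
    have h1 : ∑ k, α k * (1 - ∑ i, if q ≤ f k (prof T R0 {i}) then (1 : ℝ) else 0) = 0 := by
      simp only [mul_sub, mul_one, Finset.mul_sum]
      rw [Finset.sum_sub_distrib, hα1, Finset.sum_comm]
      simp only [hW]
      simp [hε1]
    have h2 : ∀ k, (∑ i, if q ≤ f k (prof T R0 {i}) then (1 : ℝ) else 0) ≤ 1 := by
      intro k
      rw [Finset.sum_boole]
      have : (Finset.univ.filter (fun i => q ≤ f k (prof T R0 {i}))).card ≤ 1 := by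
        rw [Finset.card_le_one]
        intro a ha b hb
        exact huniq k a b (Finset.mem_filter.mp ha).2 (Finset.mem_filter.mp hb).2
      exact_mod_cast this
    rw [Finset.sum_eq_zero_iff_of_nonneg] at h1
    · intro k
      by_contra hc
      push Not at hc
      have h3 := h1 k (Finset.mem_univ _)
      rw [Finset.sum_eq_zero] at h3
      · have := hα k
        linarith
      · intro i _
        rw [if_neg (not_le.mpr (hc i))]
    · intro k _
      exact mul_nonneg (hα k).le (by linarith [h2 k])
  choose d hd using hex
  have hdS : ∀ k S, d k ∈ S → q ≤ f k (prof T R0 S) := by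
    intro k S h
    exact (hd k).trans (hmono k (Finset.singleton_subset_iff.mpr h))
  have hSd : ∀ k S, q ≤ f k (prof T R0 S) → d k ∈ S := by
    intro k S h
    have h1 : ∑ k, α k * ((if q ≤ f k (prof T R0 S) then (1 : ℝ) else 0) -
        if d k ∈ S then 1 else 0) = 0 := by
      simp only [mul_sub]
      rw [Finset.sum_sub_distrib, hW, sub_eq_zero]
      have h2 : ∀ i, ε i = ∑ k, α k * if d k = i then (1 : ℝ) else 0 := by
        intro i
        have := hW {i}
        rw [Finset.sum_singleton] at this
        rw [← this]
        apply Finset.sum_congr rfl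
        intro k _
        congr 2
        apply propext
        constructor
        · intro h; exact huniq k _ _ (hd k) h
        · intro h; rw [← h]; exact hd k
      simp only [h2]
      rw [Finset.sum_comm]
      apply Finset.sum_congr rfl
      intro k _
      rw [← Finset.mul_sum]
      simp
    rw [Finset.sum_eq_zero_iff_of_nonneg] at h1
    · by_contra hc
      have h3 := h1 k (Finset.mem_univ _)
      rw [if_pos h, if_neg hc] at h3
      have := hα k
      linarith
    · intro k _
      apply mul_nonneg (hα k).le
      have := hdS k S
      split_ifs <;> first | (exfalso; tauto) | norm_num
  have hcard := card_eq hβ hanon hT hR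
  intro S S' hS hSS _
  constructor
  · intro t ht
    apply per_capita_aux α hα (fun k S => t ≤ f k (prof T R0 S)) d
      (fun S => (β S).prob (upSet t)) _ _ _ _ S S' hS hSS.1
    · intro S
      rw [prob_upSet, ← phi_prof hβ hT hR, htl]
      simp only [Fin.le_def]
    · intro k S S' h1 h2
      exact le_trans h2 (hmono k h1)
    · intro k S h
      exact hSd k S (ht.trans h)
    · intro S S' h
      rw [hcard S S' h]
  · intro s hs
    apply per_capita_aux α hα (fun k S => f k (prof T R0 Sᶜ) ≤ s) d
      (fun S => (β Sᶜ).prob (downSet s)) _ _ _ _ S S' hS hSS.1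
    · intro S
      rw [prob_downSet, ← phi_prof hβ hT hR, htl]
      have h1 : ∀ x : ℝ, 1 - x = (∑ k, α k) - x := fun x => by rw [hα1]
      rw [h1, ← Finset.sum_sub_distrib]
      apply Finset.sum_congr rfl
      intro k _
      rw [Fin.le_def]
      split_ifs <;> first | omega | ring
    · intro k S S' h1 h2
      exact le_trans (hmono k (Finset.compl_subset_compl.mpr h1)) h2
    · intro k S h
      by_contra hc
      have h1 := hdS k Sᶜ (by simpa using hc)
      have := h1.trans (h.trans hs)
      rw [Fin.le_def] at this
      omega
    · intro S S' h
      have : Sᶜ.card = S'ᶜ.card := by rw [Finset.card_compl, Finset.card_compl, h]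
      simp only [hcard _ _ this]

end
end PFBRAux

namespace PFBRAux

variable {m n : ℕ}

lemma quantile (V : Finset ℝ) (hV : ∀ v ∈ V, 0 < v) :
    ∃ (U : Finset ℝ) (w : ℝ → ℝ), (∀ u ∈ U, 0 ≤ u ∧ ∃ v ∈ V, u < v) ∧ (∀ u, 0 ≤ w u) ∧
      ∀ v ∈ V, ∑ u ∈ U, w u * (if u < v then 1 else 0) = v := by
  classical
  induction V using Finset.induction_on_max with
  | empty => exact ⟨∅, fun _ => 0, by simp, by simp, by simp⟩
  | insert a s hs ih =>
    obtain ⟨U, w, h1, h2, h3⟩ := ih (fun v hv => hV v (Finset.mem_insert_of_mem hv))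
    have ha := hV a (Finset.mem_insert_self _ _)
    -- c = max of s or 0
    obtain ⟨c, hc0, hca, hcs, hcU, hcsum⟩ : ∃ c : ℝ, 0 ≤ c ∧ c < a ∧ (∀ v ∈ s, v ≤ c) ∧
        (∀ u ∈ U, u < c) ∧ ∑ u ∈ U, w u = c := by
      rcases s.eq_empty_or_nonempty with rfl | hne
      · have hU : U = ∅ := by
          rw [Finset.eq_empty_iff_forall_notMem]
          intro u hu
          obtain ⟨_, v, hv, _⟩ := h1 u hu
          simp at hv
        subst hU
        exact ⟨0, le_rfl, ha, by simp, by simp, by simp⟩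
      · have hlt : ∀ u ∈ U, u < s.max' hne := by
          intro u hu
          obtain ⟨_, v, hv, huv⟩ := h1 u hu
          exact lt_of_lt_of_le huv (Finset.le_max' _ _ hv)
        have hm := s.max'_mem hne
        refine ⟨s.max' hne, (hV _ (Finset.mem_insert_of_mem hm)).le, hs _ hm,
          fun v hv => Finset.le_max' _ _ hv, hlt, ?_⟩
        refine (Finset.sum_congr rfl ?_).trans (h3 _ hm)
        intro u hu
        rw [if_pos (hlt u hu), mul_one]
    have hcn : c ∉ U := fun h => lt_irrefl _ (hcU c h)
    refine ⟨insert c U, Function.update w c (a - c), ?_, ?_, ?_⟩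
    · intro u hu
      rcases Finset.mem_insert.mp hu with rfl | hu
      · exact ⟨hc0, a, Finset.mem_insert_self _ _, hca⟩
      · obtain ⟨h, v, hv, huv⟩ := h1 u hu
        exact ⟨h, v, Finset.mem_insert_of_mem hv, huv⟩
    · intro u
      by_cases h : u = c
      · subst h; simp; linarith
      · simp [h, h2]
    · have hw : ∀ u ∈ U, Function.update w c (a - c) u = w u := by
        intro u hu
        have : u ≠ c := fun h => hcn (h ▸ hu)
        simp [this]
      intro v hv
      rw [Finset.sum_insert hcn, Function.update_self]
      rcases Finset.mem_insert.mp hv with rfl | hv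
      · rw [if_pos hca]
        have : ∑ u ∈ U, Function.update w c (v - c) u * (if u < v then 1 else 0) = ∑ u ∈ U, w u := by
          apply Finset.sum_congr rfl
          intro u hu
          rw [hw u hu, if_pos ((hcU u hu).trans hca), mul_one]
        rw [this, hcsum]
        ring
      · rw [if_neg (not_lt.mpr (hcs v hv)), mul_zero, zero_add]
        refine (Finset.sum_congr rfl ?_).trans (h3 v hv)
        intro u hu
        rw [hw u hu]

lemma quantile' (V : Finset ℝ) (hV : ∀ v ∈ V, 0 ≤ v ∧ v ≤ 1) :
    ∃ (U : Finset ℝ) (w : ℝ → ℝ), (∀ u ∈ U, 0 ≤ u ∧ u < 1) ∧ (∀ u, 0 ≤ w u) ∧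
      ∑ u ∈ U, w u = 1 ∧
      ∀ v ∈ V, ∑ u ∈ U, w u * (if u < v then 1 else 0) = v := by
  classical
  obtain ⟨U, w, h1, h2, h3⟩ := quantile (insert 1 (V.filter (fun v => 0 < v))) (by
    intro v hv
    rcases Finset.mem_insert.mp hv with rfl | hv
    · norm_num
    · exact (Finset.mem_filter.mp hv).2)
  have h4 : ∀ u ∈ U, 0 ≤ u ∧ u < 1 := by
    intro u hu
    obtain ⟨h, v, hv, huv⟩ := h1 u hu
    refine ⟨h, ?_⟩
    rcases Finset.mem_insert.mp hv with rfl | hv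
    · exact huv
    · exact lt_of_lt_of_le huv (hV v (Finset.mem_filter.mp hv).1).2
  refine ⟨U, w, h4, h2, ?_, ?_⟩
  · have h5 := h3 1 (Finset.mem_insert_self _ _)
    refine (Finset.sum_congr rfl ?_).trans h5
    intro u hu
    rw [if_pos (h4 u hu).2, mul_one]
  · intro v hv
    by_cases h : 0 < v
    · exact h3 v (Finset.mem_insert_of_mem (Finset.mem_filter.mpr ⟨hv, h⟩))
    · have : v = 0 := le_antisymm (not_lt.mp h) (hV v hv).1
      subst this
      apply Finset.sum_eq_zero
      intro u hu
      rw [if_neg (not_lt.mpr (h4 u hu).1), mul_zero]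

section
variable [NeZero m]

lemma decomposable_of {D : Set (Pref m)} (φ : Profile D n → Lottery m) {ι : Type} [Fintype ι]
    (f : ι → Profile D n → Fin m) (α : ι → ℝ) (hα : ∀ k, 0 ≤ α k) (h1 : ∑ k, α k = 1)
    (hf : ∀ k, 0 < α k → Unanimous (fun P => degLottery (f k P)) ∧
          StrategyProof (fun P => degLottery (f k P)))
    (hφ : ∀ (P : Profile D n) (a : Fin m),
      (φ P).1 a = ∑ k, α k * (if f k P = a then 1 else 0)) : Decomposable φ := by
  classical
  let e := Fintype.equivFin {k // 0 < α k}
  have key : ∀ g : ι → ℝ, ∑ k : Fin (Fintype.card {k // 0 < α k}),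
      α (e.symm k) * g (e.symm k) = ∑ k, α k * g k := by
    intro g
    rw [Equiv.sum_comp e.symm (fun k : {k // 0 < α k} => α k * g k)]
    rw [← Finset.sum_subtype (Finset.univ.filter (fun k => 0 < α k)) (by simp)
      (fun k => α k * g k)]
    rw [Finset.sum_filter]
    apply Finset.sum_congr rfl
    intro k _
    split_ifs with h
    · rfl
    · rw [le_antisymm (not_lt.mp h) (hα k), zero_mul]
  refine ⟨Fintype.card {k // 0 < α k}, fun k => f (e.symm k), fun k => α (e.symm k), ?_, ?_, ?_, ?_⟩
  · intro k; exact (e.symm k).2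
  · have := key (fun _ => 1)
    simp only [mul_one] at this
    rw [this, h1]
  · intro k; exact hf _ (e.symm k).2
  · intro P a
    rw [hφ, key (fun k => if f k P = a then 1 else 0)]

/-- outcome from a threshold predicate -/
def outc {D : Set (Pref m)} (A : Finset (Fin n) → ℕ → Prop) (P : Profile D n) : Fin m :=
  open Classical in
  if h : (Finset.univ.filter (fun k : Fin m => A (vs P k) k)).Nonempty then
    (Finset.univ.filter (fun k : Fin m => A (vs P k) k)).max' h else 0

lemma vs_anti {D : Set (Pref m)} (P : Profile D n) {k l : ℕ} (h : k ≤ l) : vs P l ⊆ vs P k := by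
  intro i hi
  simp only [vs, Finset.mem_filter, Finset.mem_univ, true_and] at *
  omega

lemma le_outc {D : Set (Pref m)} (A : Finset (Fin n) → ℕ → Prop)
    (h0 : ∀ S, A S 0) (hS : ∀ S S' k, k < m → S ⊆ S' → A S k → A S' k)
    (hk : ∀ S k l, k ≤ l → A S l → A S k) (P : Profile D n) (k : ℕ) (hkm : k < m) :
    k ≤ (outc A P : ℕ) ↔ A (vs P k) k := by
  classical
  have hne : (Finset.univ.filter (fun k : Fin m => A (vs P k) k)).Nonempty :=
    ⟨0, by simp [h0]⟩
  have ho : outc A P = (Finset.univ.filter (fun k : Fin m => A (vs P k) k)).max' hne := by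
    unfold outc
    rw [dif_pos hne]
  constructor
  · intro h
    have h1 := Finset.max'_mem _ hne
    rw [← ho] at h1
    have h2 := (Finset.mem_filter.mp h1).2
    exact hS _ _ _ hkm (vs_anti P h) (hk _ _ _ h h2)
  · intro h
    have := Finset.le_max' (Finset.univ.filter (fun k : Fin m => A (vs P k) k)) ⟨k, hkm⟩
      (Finset.mem_filter.mpr ⟨Finset.mem_univ _, h⟩)
    rw [← ho, Fin.le_def] at this
    exact this

lemma outc_unan {D : Set (Pref m)} (A : Finset (Fin n) → ℕ → Prop)
    (h0 : ∀ S, A S 0) (hS : ∀ S S' k, k < m → S ⊆ S' → A S k → A S' k)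
    (hk : ∀ S k l, k ≤ l → A S l → A S k)
    (hN : ∀ k, k < m → A Finset.univ k) (hE : ∀ k, 0 < k → ¬ A ∅ k) :
    Unanimous (D := D) (n := n) (fun P => degLottery (outc A P)) := by
  intro P a ha
  have : outc A P = a := by
    apply le_antisymm
    · by_contra hc
      rw [not_le, Fin.lt_def] at hc
      have h1 := (le_outc A h0 hS hk P _ (outc A P).2).1 le_rfl
      have h2 : vs P (outc A P) = ∅ := by
        apply Finset.filter_eq_empty_iff.mpr
        intro i _
        rw [ha i]
        omega
      rw [h2] at h1
      exact hE _ (by omega) h1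
    · rw [Fin.le_def, le_outc A h0 hS hk P _ a.2]
      have h2 : vs P a = Finset.univ := by
        apply Finset.filter_true_of_mem
        intro i _
        rw [ha i]
      rw [h2]
      exact hN _ a.2
  simp only [this]

lemma outc_sp {p q : Fin m} (hgap1 : (p : ℕ) + 1 < (q : ℕ)) (A : Finset (Fin n) → ℕ → Prop)
    (h0 : ∀ S, A S 0) (hS : ∀ S S' k, k < m → S ⊆ S' → A S k → A S' k)
    (hk : ∀ S k l, k ≤ l → A S l → A S k) (d : Fin n)
    (hd : ∀ S k, (p : ℕ) < k → k ≤ q → (A S k ↔ d ∈ S)) :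
    StrategyProof (D := hybridDomain p q) (n := n) (fun P => degLottery (outc A P)) := by
  rw [sp_iff]
  intro i P Q
  have hle := fun P => le_outc (D := hybridDomain p q) A h0 hS hk P
  set P' := Function.update P i Q with hP'
  set y := outc A P with hy
  set y' := outc A P' with hy'
  have hq := q.2
  by_cases hyy : y = y'
  · rw [hyy]
  apply le_of_lt
  set x := topOf (P i) with hx
  have hx' : (P i).1 0 = x := rfl
  obtain ⟨c1, c2, c3⟩ := (P i).2
  rw [hx'] at c1 c2 c3
  -- comparison
  have hlo : ∀ k : ℕ, k < m → k ≤ x → k ≤ y' → k ≤ y := by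
    intro k hkm h1 h2
    rw [hle P' k hkm] at h2
    rw [hle P k hkm]
    refine hS _ _ _ hkm ?_ h2
    intro j hj
    simp only [vs, Finset.mem_filter, Finset.mem_univ, true_and] at *
    by_cases hji : j = i
    · subst hji; exact h1
    · rw [hP'] at hj; simpa [hji] using hj
  have hhi : ∀ k : ℕ, k < m → (x : ℕ) < k → k ≤ y → k ≤ y' := by
    intro k hkm h1 h2
    rw [hle P k hkm] at h2
    rw [hle P' k hkm]
    refine hS _ _ _ hkm ?_ h2
    intro j hj
    simp only [vs, Finset.mem_filter, Finset.mem_univ, true_and] at *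
    by_cases hji : j = i
    · subst hji; omega
    · rw [hP']; simpa [hji] using hj
  have hmid : ∀ (P : Profile (hybridDomain p q) n) (k : ℕ), (p : ℕ) < k → k ≤ q →
      (k ≤ (outc A P : ℕ) ↔ k ≤ (topOf (P d) : ℕ)) := by
    intro P k h1 h2
    rw [hle P k (by omega), hd _ _ h1 h2]
    simp [vs]
  have hne : (y : ℕ) ≠ y' := fun h => hyy (Fin.ext h)
  have hym := y.2
  have hym' := y'.2
  -- the chain
  have hxy : y = x ∨ (x < y ∧ y < y') ∨ (y < x ∧ y' < y) := by
    rcases lt_trichotomy (x : ℕ) y with h | h | h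
    · right; left
      have := hhi y hym h le_rfl
      simp only [Fin.lt_def]
      omega
    · left; exact Fin.ext h.symm
    · right; right
      simp only [Fin.lt_def]
      have h1 := hlo x x.2 le_rfl
      have h2 := hlo y' hym'
      omega
  rcases hxy with h | h
  · rw [h, ← hx', Equiv.symm_apply_apply]
    rw [Fin.pos_iff_ne_zero]
    intro hc
    apply hyy
    rw [h, ← hx', ← hc]
    simp
  -- y not interior
  have hint : y ≤ p ∨ q ≤ y := by
    by_contra hc
    push Not at hc
    simp only [Fin.lt_def] at hc h
    have e1 := hmid P y hc.1 hc.2.le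
    have e2 := hmid P (y + 1) (by omega) hc.2
    rw [← hy] at e1 e2
    have e3 : (topOf (P d) : ℕ) = y := by omega
    have hdi : d ≠ i := by
      intro hdi
      rw [hdi] at e3
      rw [← hx] at e3
      omega
    have e4 : P' d = P d := by simp [hP', hdi]
    have e5 := hmid P' y hc.1 hc.2.le
    have e6 := hmid P' (y + 1) (by omega) hc.2
    rw [e4, ← hy'] at e5 e6
    omega
  simp only [Prefers] at c1 c2 c3
  set s := (P i).1.symm with hs
  simp only [Fin.le_def, Fin.lt_def, ne_eq, Fin.ext_iff] at *
  rcases h with ⟨h1, h2⟩ | ⟨h1, h2⟩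
  · rcases hint with h3 | h3
    · by_cases h4 : (y' : ℕ) ≤ p
      · exact c1 y' y (by omega) (by omega)
      · have t1 : (s y : ℕ) ≤ s p := by
          by_cases h5 : y = p
          · rw [h5]
          · have h5 : (y : ℕ) ≠ p := fun h => h5 (Fin.ext h)
            exact (c1 p y (by omega) (by omega)).le
        by_cases h6 : (y' : ℕ) ≤ q
        · exact lt_of_le_of_lt t1 (c2 (by omega) y' (by omega) (by omega) (by omega))
        · have t2 := c2 (by omega) q (by omega) (by omega) (by omega)
          have t3 := c1 y' q (by omega) (by omega)
          omega
    · exact c1 y' y (by omega) (by omega)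
  · rcases hint with h3 | h3
    · exact c1 y' y (by omega) (by omega)
    · by_cases h4 : (q : ℕ) ≤ y'
      · exact c1 y' y (by omega) (by omega)
      · have t1 : (s y : ℕ) ≤ s q := by
          by_cases h5 : y = q
          · rw [h5]
          · have h5 : (y : ℕ) ≠ q := fun h => h5 (Fin.ext h)
            exact (c1 q y (by omega) (by omega)).le
        by_cases h6 : (p : ℕ) ≤ y'
        · exact lt_of_le_of_lt t1 (c3 (by omega) y' (by omega) (by omega) (by omega))
        · have t2 := c3 (by omega) p (by omega) (by omega) (by omega)
          have t3 := c1 y' p (by omega) (by omega)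
          omega

end
end PFBRAux

namespace PFBRAux

variable {m n : ℕ} [NeZero m]

/-- The threshold predicate for dictator `d` and quantile `u`. -/
def thr (p q : Fin m) (β : Finset (Fin n) → Lottery m) (d : Fin n) (u : ℝ)
    (S : Finset (Fin n)) (k : ℕ) : Prop :=
  (d ∈ S ∧ (k ≤ q ∨ u * S.card < tl (β S) k * n)) ∨
  (d ∉ S ∧ (k = 0 ∨ (k ≤ p ∧ (1 - tl (β S) k) * n ≤ u * Sᶜ.card)))

theorem backward (hn : 2 ≤ n) {p q : Fin m} (hgap1 : (p : ℕ) + 1 < (q : ℕ))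
    (φ : Profile (hybridDomain p q) n → Lottery m)
    (β : Finset (Fin n) → Lottery m)
    (hβ : IsPFBRWith φ β) (hcrd : ConstrainedRD p q β)
    (hanon : Anonymous φ) (hpc : PerCapitaMonotone p q β) : Decomposable φ := by
  classical
  obtain ⟨T, I, R0, Q, hT, hI, hR, hQ, hT1, hT2, hI1, hQ1⟩ := exists_prefs p q hgap1
  have hcard := card_eq hβ hanon hT hR
  obtain ⟨ε, hε0, hε1, hε⟩ := hcrd
  have hn0 : (0 : ℝ) < n := by exact_mod_cast (by omega : 0 < n)
  have hqm := q.2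
  have hεeq : ∀ i, ε i = 1 / n := by
    have h1 : ∀ i j, ε i = ε j := by
      intro i j
      have hi := (hε {i}).1
      have hj := (hε {j}).1
      rw [hcard {i} {j} (by simp)] at hi
      rw [Finset.sum_singleton] at hi hj
      rw [← hi, ← hj]
    intro i
    have h2 : ∑ j, ε j = n * ε i := by
      rw [Finset.sum_congr rfl (fun j _ => h1 j i)]
      simp
    rw [hε1] at h2
    rw [eq_div_iff hn0.ne']
    linarith
  have hmid : ∀ S (k : ℕ), (p : ℕ) < k → k ≤ q → tl (β S) k * n = S.card := by
    intro S k h1 h2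
    rw [mid_tl hε1 hε S h1 h2]
    simp only [hεeq]
    rw [Finset.sum_const, nsmul_eq_mul]
    field_simp
  have hcc : ∀ S : Finset (Fin n), (Sᶜ.card : ℝ) = n - S.card := by
    intro S
    have := Finset.card_add_card_compl S
    simp only [Fintype.card_fin] at this
    rw [eq_sub_iff_add_eq]
    exact_mod_cast (by omega : Sᶜ.card + S.card = n)
  have hupb : ∀ S (k : ℕ), (q : ℕ) ≤ k → tl (β S) k * n ≤ S.card := by
    intro S k h
    rw [← hmid S q (by omega) le_rfl]
    exact mul_le_mul_of_nonneg_right (tl_anti _ h) hn0.le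
  have hdnb : ∀ S (k : ℕ), k ≤ (p : ℕ) → (1 - tl (β S) k) * n ≤ Sᶜ.card := by
    intro S k h
    have h1 := hmid S (p + 1) (by omega) (by omega)
    have h2 := mul_le_mul_of_nonneg_right (tl_anti (β S) (show k ≤ p + 1 by omega)) hn0.le
    rw [hcc]
    linarith
  have htl1 : ∀ S (k : ℕ), tl (β S) k ≤ 1 := by
    intro S k
    rw [← tl_zero (β S)]
    exact tl_anti _ (Nat.zero_le _)
  have htl0 : ∀ S (k : ℕ), 0 ≤ tl (β S) k := fun S k => tl_nonneg _ _
  have hc0 : ∀ S : Finset (Fin n), (0 : ℝ) ≤ S.card := fun S => Nat.cast_nonneg _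
  have hunivtl : ∀ k, k < m → tl (β Finset.univ) k = 1 := by
    intro k hk
    rw [hβ.1.1, tl_deg, if_pos]
    have hlast : ((lastAlt m : Fin m) : ℕ) = m - 1 := rfl
    omega
  have hemptl : ∀ k, 0 < k → tl (β ∅) k = 0 := by
    intro k hk
    rw [hβ.1.2, tl_deg, if_neg]
    rw [zero_val]
    omega
  obtain ⟨U, w, hU, hw0, hw1, hw⟩ := quantile'
    (Finset.univ.image (fun z : Finset (Fin n) × Fin m =>
        if (q : ℕ) ≤ z.2 then tl (β z.1) z.2 * n / z.1.card else 0) ∪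
      Finset.univ.image (fun z : Finset (Fin n) × Fin m =>
        if (z.2 : ℕ) ≤ p then (1 - tl (β z.1) z.2) * n / (z.1)ᶜ.card else 0)) (by
      intro v hv
      rcases Finset.mem_union.mp hv with hv | hv
      · obtain ⟨⟨S, k⟩, _, rfl⟩ := Finset.mem_image.mp hv
        dsimp only
        split_ifs with h
        · exact ⟨div_nonneg (mul_nonneg (htl0 _ _) hn0.le) (hc0 _),
            div_le_one_of_le₀ (hupb S k h) (hc0 _)⟩
        · norm_num
      · obtain ⟨⟨S, k⟩, _, rfl⟩ := Finset.mem_image.mp hv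
        dsimp only
        split_ifs with h
        · exact ⟨div_nonneg (mul_nonneg (by linarith [htl1 S k]) hn0.le) (hc0 _),
            div_le_one_of_le₀ (hdnb S k h) (hc0 _)⟩
        · norm_num)
  -- sum formulas
  have hsum1 : ∀ (S : Finset (Fin n)) (k : ℕ), k < m → (q : ℕ) ≤ k → S.Nonempty →
      ∑ u ∈ U, w u * (if u * S.card < tl (β S) k * n then 1 else 0) = tl (β S) k * n / S.card := by
    intro S k hkm hqk hS
    have hS0 : (0 : ℝ) < S.card := by exact_mod_cast hS.card_pos
    have := hw (tl (β S) k * n / S.card) (by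
      apply Finset.mem_union_left
      apply Finset.mem_image.mpr
      exact ⟨(S, ⟨k, hkm⟩), Finset.mem_univ _, by simp [hqk]⟩)
    simpa only [lt_div_iff₀ hS0] using this
  have hsum2 : ∀ (S : Finset (Fin n)) (k : ℕ), k < m → k ≤ (p : ℕ) → Sᶜ.Nonempty →
      ∑ u ∈ U, w u * (if (1 - tl (β S) k) * n ≤ u * Sᶜ.card then 1 else 0)
        = 1 - (1 - tl (β S) k) * n / Sᶜ.card := by
    intro S k hkm hqk hS
    have hS0 : (0 : ℝ) < Sᶜ.card := by exact_mod_cast hS.card_pos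
    have := hw ((1 - tl (β S) k) * n / Sᶜ.card) (by
      apply Finset.mem_union_right
      apply Finset.mem_image.mpr
      exact ⟨(S, ⟨k, hkm⟩), Finset.mem_univ _, by simp only; rw [if_pos hqk]⟩)
    simp only [lt_div_iff₀ hS0] at this
    rw [← this, ← hw1, ← Finset.sum_sub_distrib]
    apply Finset.sum_congr rfl
    intro u _
    rw [hw1]
    simp only [← not_lt]
    split_ifs <;> simp
  -- properties of thr
  have h0 : ∀ d u S, thr p q β d u S 0 := by
    intro d u S
    by_cases h : d ∈ S
    · exact Or.inl ⟨h, Or.inl (Nat.zero_le _)⟩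
    · exact Or.inr ⟨h, Or.inl rfl⟩
  have hS : ∀ d, ∀ u ∈ U, ∀ S S' k, k < m → S ⊆ S' → thr p q β d u S k → thr p q β d u S' k := by
    intro d u hu S S' k hkm hSS h
    obtain ⟨hu0, hu1⟩ := hU u hu
    rcases eq_or_ne S S' with rfl | hne
    · exact h
    have hss : S ⊂ S' := lt_of_le_of_ne hSS hne
    rcases h with ⟨hd, h⟩ | ⟨hd, h⟩
    · refine Or.inl ⟨hSS hd, ?_⟩
      by_cases hkq : k ≤ q
      · exact Or.inl hkq
      have h := h.resolve_left hkq
      right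
      by_cases hN : S' = Finset.univ
      · rw [hN, hunivtl k hkm]
        simp only [Finset.card_univ, Fintype.card_fin]
        nlinarith
      · have h1 := (hpc S S' ⟨d, hd⟩ hss (Finset.ssubset_univ_iff.mpr hN)).1 ⟨k, hkm⟩
          (by rw [Fin.le_def]; simp only; omega)
        rw [prob_upSet, prob_upSet] at h1
        simp only at h1
        have p1 : (0 : ℝ) < S.card := by exact_mod_cast Finset.card_pos.mpr ⟨d, hd⟩
        have p2 : (0 : ℝ) < S'.card := by exact_mod_cast Finset.card_pos.mpr ⟨d, hSS hd⟩
        have h2 : u < tl (β S) k * n / S.card := by rwa [lt_div_iff₀ p1]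
        rw [← lt_div_iff₀ p2]
        have h3 := mul_le_mul_of_nonneg_right h1 hn0.le
        rw [div_mul_eq_mul_div, div_mul_eq_mul_div] at h3
        linarith
    · by_cases hd' : d ∈ S'
      · refine Or.inl ⟨hd', Or.inl ?_⟩
        omega
      · refine Or.inr ⟨hd', ?_⟩
        rcases Nat.eq_zero_or_pos k with hk0 | hk0
        · exact Or.inl hk0
        · obtain ⟨hkp, h⟩ := h.resolve_left (by omega)
          refine Or.inr ⟨hkp, ?_⟩
          have hdc : d ∈ S'ᶜ := by simpa using hd'
          have hdc' : d ∈ Sᶜ := by simpa using hd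
          have hSne : S ≠ ∅ := by
            intro hS
            rw [hS, hemptl k hk0] at h
            simp only [Finset.compl_empty, Finset.card_univ, Fintype.card_fin] at h
            nlinarith
          have h1 := (hpc S'ᶜ Sᶜ ⟨d, hdc⟩ (Finset.compl_ssubset_compl.mpr hss)
            (Finset.ssubset_univ_iff.mpr (by simpa using hSne))).2 ⟨k - 1, by omega⟩
            (by rw [Fin.le_def]; simp only; omega)
          rw [prob_downSet, prob_downSet, compl_compl, compl_compl] at h1
          simp only at h1
          rw [show k - 1 + 1 = k by omega] at h1
          have p1 : (0 : ℝ) < S'ᶜ.card := by exact_mod_cast Finset.card_pos.mpr ⟨d, hdc⟩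
          have p2 : (0 : ℝ) < Sᶜ.card := by exact_mod_cast Finset.card_pos.mpr ⟨d, hdc'⟩
          have h2 : (1 - tl (β S) k) * n / Sᶜ.card ≤ u := by rwa [div_le_iff₀ p2]
          rw [← div_le_iff₀ p1]
          have h3 := mul_le_mul_of_nonneg_right h1 hn0.le
          rw [div_mul_eq_mul_div, div_mul_eq_mul_div] at h3
          linarith
  have hk : ∀ d u S k l, k ≤ l → thr p q β d u S l → thr p q β d u S k := by
    intro d u S k l hkl h
    rcases h with ⟨hd, h⟩ | ⟨hd, h⟩
    · refine Or.inl ⟨hd, ?_⟩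
      rcases h with h | h
      · exact Or.inl (by omega)
      · exact Or.inr (lt_of_lt_of_le h (mul_le_mul_of_nonneg_right (tl_anti _ hkl) hn0.le))
    · refine Or.inr ⟨hd, ?_⟩
      rcases h with h | ⟨h, h'⟩
      · exact Or.inl (by omega)
      · refine Or.inr ⟨by omega, ?_⟩
        have := mul_le_mul_of_nonneg_right (tl_anti (β S) hkl) hn0.le
        linarith
  have hN : ∀ d, ∀ u ∈ U, ∀ k, k < m → thr p q β d u Finset.univ k := by
    intro d u hu k hkm
    refine Or.inl ⟨Finset.mem_univ _, Or.inr ?_⟩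
    obtain ⟨hu0, hu1⟩ := hU u hu
    rw [hunivtl k hkm]
    simp only [Finset.card_univ, Fintype.card_fin]
    nlinarith
  have hE : ∀ d, ∀ u ∈ U, ∀ k, 0 < k → ¬ thr p q β d u ∅ k := by
    intro d u hu k hk0 h
    obtain ⟨hu0, hu1⟩ := hU u hu
    rcases h with ⟨hd, h⟩ | ⟨hd, h⟩
    · simp at hd
    · obtain ⟨_, h⟩ := h.resolve_left (by omega)
      rw [hemptl k hk0] at h
      simp only [Finset.compl_empty, Finset.card_univ, Fintype.card_fin] at h
      nlinarith
  have hdict : ∀ d u S k, (p : ℕ) < k → k ≤ q → (thr p q β d u S k ↔ d ∈ S) := by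
    intro d u S k h1 h2
    constructor
    · rintro (⟨hd, _⟩ | ⟨_, h⟩)
      · exact hd
      · omega
    · intro hd
      exact Or.inl ⟨hd, Or.inl h2⟩
  -- mixture formula
  have hmix : ∀ S k, k < m →
      ∑ z : Fin n × U, (w z.2 / n) * (if thr p q β z.1 z.2 S k then 1 else 0) = tl (β S) k := by
    intro S k hkm
    rw [Fintype.sum_prod_type]
    have hin : ∀ d, ∑ u : U, (w u / n) * (if thr p q β d u S k then (1 : ℝ) else 0) =
        (∑ u ∈ U, w u * (if thr p q β d u S k then 1 else 0)) / n := by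
      intro d
      rw [Finset.sum_coe_sort U (fun u => (w u / n) * (if thr p q β d u S k then (1 : ℝ) else 0)),
        Finset.sum_div]
      apply Finset.sum_congr rfl
      intro u _
      ring
    simp only [hin]
    rw [← Finset.sum_div, div_eq_iff hn0.ne']
    rw [← Finset.sum_add_sum_compl S]
    have hconst : ∀ (B : Finset (Fin n)) (c : ℝ) (g : Fin n → ℝ), (∀ d ∈ B, g d = c) →
        ∑ d ∈ B, g d = B.card * c := by
      intro B c g h
      rw [Finset.sum_congr rfl h, Finset.sum_const, nsmul_eq_mul]
    have hone : ∀ d, (∀ u, thr p q β d u S k) →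
        ∑ u ∈ U, w u * (if thr p q β d u S k then (1 : ℝ) else 0) = 1 := by
      intro d h
      rw [← hw1]
      apply Finset.sum_congr rfl
      intro u _
      rw [if_pos (h u), hw1, mul_one]
    have hzero : ∀ d, (∀ u, ¬ thr p q β d u S k) →
        ∑ u ∈ U, w u * (if thr p q β d u S k then (1 : ℝ) else 0) = 0 := by
      intro d h
      apply Finset.sum_eq_zero
      intro u _
      rw [if_neg (h u), mul_zero]
    rcases Nat.eq_zero_or_pos k with rfl | hk0
    · rw [hconst S 1 _ (fun d _ => hone d (fun u => h0 d u S)),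
        hconst Sᶜ 1 _ (fun d _ => hone d (fun u => h0 d u S)), tl_zero, hcc]
      ring
    by_cases hkp : k ≤ p
    · rw [hconst S 1 _ (fun d hd => hone d (fun u => Or.inl ⟨hd, Or.inl (by omega)⟩))]
      by_cases hSc : Sᶜ.Nonempty
      · rw [hconst Sᶜ (1 - (1 - tl (β S) k) * n / Sᶜ.card)]
        · have p1 : (0 : ℝ) < Sᶜ.card := by exact_mod_cast hSc.card_pos
          rw [mul_sub, mul_div_cancel₀ _ p1.ne', hcc]
          ring
        · intro d hd
          rw [← hsum2 S k hkm hkp hSc]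
          apply Finset.sum_congr rfl
          intro u _
          have hd : d ∉ S := by simpa using hd
          have : thr p q β d u S k ↔ (1 - tl (β S) k) * n ≤ u * Sᶜ.card := by
            unfold thr
            simp only [hd, hkp, hk0.ne', false_and, false_or, true_and, not_false_eq_true]
          simp only [this]
      · have hSu : S = Finset.univ := by
          rw [Finset.not_nonempty_iff_eq_empty] at hSc
          simpa using hSc
        subst hSu
        rw [hunivtl k hkm]
        simp
    by_cases hkq : k ≤ q
    · rw [hconst S 1 _ (fun d hd => hone d (fun u => Or.inl ⟨hd, Or.inl hkq⟩)),
        hconst Sᶜ 0 _ (fun d hd => hzero d (fun u h =>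
          (Finset.mem_compl.mp hd) ((hdict d u S k (by omega) hkq).1 h))),
        hmid S k (by omega) hkq]
      ring
    · rw [hconst Sᶜ 0 _ (fun d hd => hzero d (fun u h => by
          have hd : d ∉ S := by simpa using hd
          rcases h with ⟨h, _⟩ | ⟨_, h⟩
          · exact hd h
          · omega))]
      rcases S.eq_empty_or_nonempty with rfl | hSne
      · rw [hemptl k hk0]; simp
      · rw [hconst S (tl (β S) k * n / S.card)]
        · have p1 : (0 : ℝ) < S.card := by exact_mod_cast hSne.card_pos
          rw [mul_div_cancel₀ _ p1.ne']
          ring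
        · intro d hd
          rw [← hsum1 S k hkm (by omega) hSne]
          apply Finset.sum_congr rfl
          intro u _
          have : thr p q β d u S k ↔ u * S.card < tl (β S) k * n := by
            unfold thr
            simp only [hd, hkq, false_and, false_or, true_and, not_true_eq_false, or_false]
          simp only [this]
  apply decomposable_of φ (ι := Fin n × U)
    (fun z => outc (thr p q β z.1 z.2)) (fun z => w z.2 / n)
  · intro z; exact div_nonneg (hw0 _) hn0.le
  · have := hmix ∅ 0 (by omega)
    simpa only [h0, if_true, mul_one, tl_zero] using this
  · intro z _
    exact ⟨outc_unan _ (h0 _ _) (hS _ _ z.2.2) (hk _ _) (hN _ _ z.2.2) (hE _ _ z.2.2),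
      outc_sp hgap1 _ (h0 _ _) (hS _ _ z.2.2) (hk _ _) z.1 (hdict _ _)⟩
  · intro P a
    have hle : ∀ (z : Fin n × U) (k : ℕ), k < m →
        (k ≤ (outc (thr p q β z.1 z.2) P : ℕ) ↔ thr p q β z.1 z.2 (vs P k) k) :=
      fun z k hk' => le_outc _ (h0 _ _) (hS _ _ z.2.2) (hk _ _) P k hk'
    have htail : ∀ k : ℕ, ∑ z : Fin n × U, (w z.2 / n) *
        (if k ≤ (outc (thr p q β z.1 z.2) P : ℕ) then 1 else 0) = tl (φ P) k := by
      intro k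
      by_cases hkm : k < m
      · rw [tl_phi hβ, ← hmix _ k hkm]
        apply Finset.sum_congr rfl
        intro z _
        simp only [hle z k hkm]
      · rw [tl_ge _ (by omega)]
        apply Finset.sum_eq_zero
        intro z _
        have := (outc (thr p q β z.1 z.2) P).2
        rw [if_neg (by omega), mul_zero]
    rw [← tl_diff, ← htail, ← htail, ← Finset.sum_sub_distrib]
    apply Finset.sum_congr rfl
    intro z _
    simp only [Fin.ext_iff]
    split_ifs <;> first | omega | ring

end PFBRAux

/-- An anonymous `(p,q)`-PFBR (`1 < q - p < m - 1`) is decomposable iff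
its probabilistic ballots satisfy per-capita monotonicity w.r.t. `a_p` and `a_q`. -/
theorem decomposability_iff_per_capita_monotone (m n : ℕ) [NeZero m] (hm : 3 ≤ m) (hn : 2 ≤ n)
    (p q : Fin m) (hgap1 : (p : ℕ) + 1 < (q : ℕ)) (hgap2 : (q : ℕ) - (p : ℕ) < m - 1)
    (φ : Profile (hybridDomain p q) n → Lottery m)
    (β : Finset (Fin n) → Lottery m)
    (hβ : IsPFBRWith φ β) (hcrd : ConstrainedRD p q β)
    (hanon : Anonymous φ) :
    Decomposable φ ↔ PerCapitaMonotone p q β := by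
  exact ⟨fun h => PFBRAux.forward hgap1 φ β hβ hcrd hanon h,
    fun h => PFBRAux.backward hn hgap1 φ β hβ hcrd hanon h⟩
end
end

section
/- If D is a minimally rich no-restoration domain of preferences over A, then the graph G_≈^A(D) is connected: for any two distinct alternatives a_s, a_t ∈ A there exists a vertex-path of G_≈^A(D) connecting a_s and a_t. -/
open Finset

noncomputable section

open PFBRPaper

theorem sc_symm_aux {m : ℕ} [NeZero m] {D : Set (Pref m)} {a b : Fin m}
    (h : StronglyConnected D a b) : StronglyConnected D b a := by
  obtain ⟨hne, P, hP, P', hP', h1, h2, h3, h4, h5⟩ := h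
  exact ⟨hne.symm, P', hP', P, hP, h3, h4, h1, h2, fun k hk => (h5 k hk).symm⟩

theorem adj_tops_aux {m : ℕ} [NeZero m] (hm : 3 ≤ m) {D : Set (Pref m)} {P P' : Pref m}
    (hP : P ∈ D) (hP' : P' ∈ D) (h : Adjacent P P') :
    P 0 = P' 0 ∨ StronglyConnected D (P 0) (P' 0) := by
  obtain ⟨-, k, hk, h1, h2, h3⟩ := h
  rcases Nat.eq_zero_or_pos k with rfl | hk0
  · right
    have e0 : (⟨0, Nat.lt_of_succ_lt hk⟩ : Fin m) = 0 := by ext; simp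
    have e1 : (⟨0 + 1, hk⟩ : Fin m) = 1 := by
      ext; simp [Fin.val_one', Nat.mod_eq_of_lt (show 1 < m by omega)]
    rw [e0, e1] at h1 h2
    refine ⟨?_, P, hP, P', hP', rfl, h2, rfl, h1.symm, ?_⟩
    · rw [← h2]
      intro h
      have := P.injective h
      rw [← e0, ← e1] at this
      simp at this
    · intro l hl
      exact h3 l (by omega) (by omega)
  · left
    apply h3
    · simp; omega
    · simp

def scGraphAux {m : ℕ} [NeZero m] (D : Set (Pref m)) : SimpleGraph (Fin m) where
  Adj a b := StronglyConnected D a b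
  symm := ⟨fun _ _ h => sc_symm_aux h⟩
  loopless := ⟨fun _ h => h.1 rfl⟩

/-- For a minimally rich no-restoration domain, the graph `G_≈^A(D)` is
connected. -/
theorem graph_connected (m : ℕ) [NeZero m] (hm : 3 ≤ m)
    (D : Set (Pref m)) (hmr : MinimallyRich D) (hnr : NoRestorationDomain D) :
    ∀ a b : Fin m, a ≠ b → ∃ l, VertexPathBetween D Set.univ a b l := by
  intro a b hab
  classical
  obtain ⟨P, hP, rfl⟩ := hmr a
  obtain ⟨P', hP', rfl⟩ := hmr b
  have hne : P ≠ P' := fun h => hab (by rw [h])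
  obtain ⟨π, v, ⟨hv, hD, -, h0, hl, hadj⟩, -⟩ := hnr P hP P' hP' hne (P 0) (P' 0)
  have key : ∀ i, i < v → (scGraphAux D).Reachable (P 0) (π i 0) := by
    intro i
    induction i with
    | zero => intro _; rw [h0]
    | succ i ih =>
      intro hi
      have h1 := ih (by omega)
      rcases adj_tops_aux hm (hD i (by omega)) (hD (i + 1) hi) (hadj i hi) with h | h
      · rw [← h]; exact h1
      · exact h1.trans (SimpleGraph.Adj.reachable (G := scGraphAux D) h)
  have hr := key (v - 1) (by omega)
  rw [hl] at hr
  obtain ⟨w, hw⟩ := hr.exists_isPath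
  refine ⟨w.support, ⟨w.support_ne_nil, hw.support_nodup, fun _ _ => Set.mem_univ _,
    w.isChain_adj_support⟩, ?_, ?_⟩
  · rw [List.head?_eq_some_head w.support_ne_nil, SimpleGraph.Walk.head_support]
  · rw [List.getLast?_eq_some_getLast w.support_ne_nil, SimpleGraph.Walk.getLast_support]
end
end

section
/- Let D be a regular domain and let a_p, a_t, a_s ∈ A be pairwise distinct alternatives such that a_t belongs to every vertex-path in Π(a_p, a_s). Then for every preference P ∈ D: if r_1(P) = a_p then a_t P a_s, and if r_1(P) = a_s then a_t P a_p. -/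
open Finset

noncomputable section

open PFBRPaper

theorem aux_top_step {m : ℕ} [NeZero m] (hm : 3 ≤ m) (D : Set (Pref m)) (P P' : Pref m)
    (hP : P ∈ D) (hP' : P' ∈ D) (h : Adjacent P P') :
    P 0 = P' 0 ∨ StronglyConnected D (P 0) (P' 0) := by
  obtain ⟨-, k, hk, h1, h2, h3⟩ := h
  have e0 : (0 : Fin m) = ⟨0, by omega⟩ := rfl
  have e1 : (1 : Fin m) = ⟨1, by omega⟩ := by
    apply Fin.ext
    change 1 % m = 1
    exact Nat.mod_eq_of_lt (by omega)
  rcases Nat.eq_zero_or_pos k with rfl | hk0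
  · right
    have h1' : P 0 = P' 1 := by rw [e0, e1]; exact h1
    have h2' : P 1 = P' 0 := by rw [e0, e1]; exact h2
    refine ⟨?_, P, hP, P', hP', rfl, h2', rfl, h1'.symm, ?_⟩
    · rw [← h2']
      intro h
      have := P.injective h
      rw [e0, e1, Fin.mk.injEq] at this
      omega
    · intro l hl
      exact h3 l (by omega) (by omega)
  · left
    exact h3 0 (by rw [e0]; simp only []; omega) (by rw [e0]; simp only []; omega)

theorem aux_sc_symm {m : ℕ} [NeZero m] (D : Set (Pref m)) (a b : Fin m)
    (h : StronglyConnected D a b) : StronglyConnected D b a := by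
  obtain ⟨h0, P, hP, P', hP', h1, h2, h3, h4, h5⟩ := h
  exact ⟨h0.symm, P', hP', P, hP, h3, h4, h1, h2, fun k hk => (h5 k hk).symm⟩

def auxGraph {m : ℕ} [NeZero m] (D : Set (Pref m)) (v : Fin m) : SimpleGraph (Fin m) where
  Adj a b := StronglyConnected D a b ∧ a ≠ v ∧ b ≠ v
  symm := ⟨fun a b h => ⟨aux_sc_symm D a b h.1, h.2.2, h.2.1⟩⟩
  loopless := ⟨fun a h => h.1.1 rfl⟩

theorem aux_walk {m : ℕ} [NeZero m] (D : Set (Pref m)) (v : Fin m) {a b : Fin m}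
    (p : (auxGraph D v).Walk a b) (ha : a ≠ v) : v ∉ p.support := by
  induction p with
  | nil => simpa using ha.symm
  | cons h p ih => simp [ha.symm, ih h.2.2]

theorem aux_key {m : ℕ} [NeZero m] (hm : 3 ≤ m)
    (D : Set (Pref m)) (hD : NoRestorationDomain D)
    (u v w x : Fin m) (huv : u ≠ v) (huw : u ≠ w)
    (hmid : ∀ l, VertexPathBetween D Set.univ u w l → v ∈ l)
    (P P' : Pref m) (hP : P ∈ D) (hP' : P' ∈ D) (hu : P 0 = u) (hw : P' 0 = w)
    (hx : Prefers P x v) (hx' : Prefers P' x v) : False := by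
  have hne : P ≠ P' := by rintro rfl; exact huw (hu.symm.trans hw)
  obtain ⟨π, n, ⟨hn, hin, -, h0, hl, hadj⟩, hnr⟩ := hD P hP P' hP' hne x v
  have hxv : x ≠ v := by rintro rfl; exact lt_irrefl _ hx
  have hall : ∀ i < n, Prefers (π i) x v := by
    intro i hi
    by_contra hc
    have hc' : Prefers (π i) v x := by
      refine lt_of_le_of_ne (not_lt.mp hc) ?_
      intro h
      exact hxv ((π i).symm.injective h).symm
    have hi0 : 0 < i := by
      rcases Nat.eq_zero_or_pos i with rfl | h
      · rw [h0] at hc; exact absurd hx hc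
      · exact h
    have hi1 : i < n - 1 := by
      rcases Nat.lt_or_ge i (n - 1) with h | h
      · exact h
      · have : i = n - 1 := by omega
        rw [this, hl] at hc; exact absurd hx' hc
    exact (hnr 0 i (n - 1) hi0 hi1 (by omega)).1 ⟨by rwa [h0], hc', by rwa [hl]⟩
  have htop : ∀ i < n, π i 0 ≠ v := by
    intro i hi h
    have := hall i hi
    unfold Prefers at this
    rw [← h, Equiv.symm_apply_apply] at this
    exact absurd this (Fin.not_lt_zero _)
  have hreach : ∀ i < n, (auxGraph D v).Reachable u (π i 0) := by
    intro i
    induction i with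
    | zero => intro _; rw [h0, hu]
    | succ i ih =>
      intro hi
      have hr := ih (by omega)
      rcases aux_top_step hm D _ _ (hin i (by omega)) (hin (i + 1) hi) (hadj i hi) with h | h
      · rwa [← h]
      · exact hr.trans (SimpleGraph.Adj.reachable
          (show (auxGraph D v).Adj _ _ from ⟨h, htop i (by omega), htop (i + 1) hi⟩))
  have hr := hreach (n - 1) (by omega)
  rw [hl, hw] at hr
  obtain ⟨p, hp⟩ := hr.exists_isPath
  refine aux_walk D v p huv (hmid p.support ⟨⟨p.support_ne_nil, hp.support_nodup, ?_, ?_⟩, ?_, ?_⟩)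
  · intro _ _; trivial
  · exact p.isChain_adj_support.imp (fun a b h => h.1)
  · rw [List.head?_eq_some_head p.support_ne_nil, p.head_support]
  · rw [List.getLast?_eq_some_getLast p.support_ne_nil, p.getLast_support]

/-- If `v` belongs to every vertex-path of `Π(u, w)`, then any preference
in the regular domain with top `u` prefers `v` to `w`, and any preference with top `w`
prefers `v` to `u`. -/
theorem preference_restriction (m : ℕ) [NeZero m] (hm : 3 ≤ m)
    (D : Set (Pref m)) (hD : RegularDomain D)
    (u v w : Fin m) (huv : u ≠ v) (hvw : v ≠ w) (huw : u ≠ w)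
    (hmid : ∀ l, VertexPathBetween D Set.univ u w l → v ∈ l) :
    ∀ P ∈ D, (P 0 = u → Prefers P v w) ∧ (P 0 = w → Prefers P v u) := by
  obtain ⟨hrich, -, hnr⟩ := hD
  have top : ∀ (P : Pref m) (a b : Fin m), P 0 = a → a ≠ b → Prefers P a b := by
    intro P a b h hab
    subst h
    unfold Prefers
    rw [Equiv.symm_apply_apply]
    refine lt_of_le_of_ne (Fin.zero_le _) ?_
    intro h
    apply hab
    rw [h, Equiv.apply_symm_apply]
  have flip : ∀ (P : Pref m) (a b : Fin m), a ≠ b → ¬ Prefers P a b → Prefers P b a := by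
    intro P a b hab hc
    refine lt_of_le_of_ne (not_lt.mp hc) ?_
    intro h
    exact hab (P.symm.injective h).symm
  intro P hP
  constructor
  · intro hu
    by_contra hc
    obtain ⟨P', hP', hw⟩ := hrich w
    exact aux_key hm D hnr u v w w huv huw hmid P P' hP hP' hu hw (flip _ _ _ hvw hc)
      (top _ _ _ hw hvw.symm)
  · intro hw
    by_contra hc
    obtain ⟨P', hP', hu⟩ := hrich u
    exact aux_key hm D hnr u v w u huv huw hmid P' P hP' hP hu hw (top _ _ _ hu huv)
      (flip _ _ _ huv.symm hc)
end
end
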